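/- arXiv:2211.12861 — 7 statements merged into one kernel-verified Lean document; each statement's English description precedes it below -/
import Mathlib

section
/- Let α > 1 be a real number and define ρ_k = Γ(k+1)/Γ(αk+1) for k = 1, 2, .... Then the sequence (ρ_k)_{k≥1} is strictly decreasing: for every integer k ≥ 1, Γ(k+2)/Γ(α(k+1)+1) < Γ(k+1)/Γ(αk+1). -/
/-- For `α > 1`, the sequence `ρ_k = Γ(k+1)/Γ(αk+1)` is strictly decreasing for `k ≥ 1`. -/
theorem gamma_ratio_strict_anti (α : ℝ) (hα : 1 < α) (k : ℕ) (hk : 1 ≤ k) :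
    Real.Gamma ((k : ℝ) + 2) / Real.Gamma (α * ((k : ℝ) + 1) + 1) <
      Real.Gamma ((k : ℝ) + 1) / Real.Gamma (α * (k : ℝ) + 1) := by
  have hk' : (1 : ℝ) ≤ k := by exact_mod_cast hk
  have hak : (k : ℝ) < α * k := by nlinarith
  have hA : 0 < Real.Gamma (α * (k : ℝ) + 1) := Real.Gamma_pos_of_pos (by linarith)
  have hB : 0 < Real.Gamma (α * ((k : ℝ) + 1) + 1) := Real.Gamma_pos_of_pos (by nlinarith)
  have hC : 0 < Real.Gamma ((k : ℝ) + 1) := Real.Gamma_pos_of_pos (by linarith)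
  have h1 : Real.Gamma ((k : ℝ) + 2) = (k + 1) * Real.Gamma ((k : ℝ) + 1) := by
    rw [← Real.Gamma_add_one (by linarith)]
    congr 1
    ring
  have h2 : Real.Gamma (α * k + 1 + 1) = (α * k + 1) * Real.Gamma (α * (k : ℝ) + 1) :=
    Real.Gamma_add_one (by linarith)
  have h3 : Real.Gamma (α * k + 1 + 1) < Real.Gamma (α * ((k : ℝ) + 1) + 1) := by
    apply Real.Gamma_strictMonoOn_Ici
    · simp only [Set.mem_Ici]; linarith
    · simp only [Set.mem_Ici]; linarith
    · linarith
  have h4 : ((k : ℝ) + 1) * Real.Gamma (α * (k : ℝ) + 1) < Real.Gamma (α * ((k : ℝ) + 1) + 1) := by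
    have := mul_lt_mul_of_pos_right (show (k : ℝ) + 1 < α * k + 1 by linarith) hA
    linarith
  rw [div_lt_div_iff₀ hB hA, h1]
  have := mul_lt_mul_of_pos_left h4 hC
  linarith
end

section
/- Let α > 1 be a real number and define r_k = Γ(k+1)/Γ(αk+α) for k = 1, 2, .... Then the sequence (r_k)_{k≥1} is strictly decreasing: for every integer k ≥ 1, Γ(k+2)/Γ(α(k+1)+α) < Γ(k+1)/Γ(αk+α). -/
/-- For `α > 1`, the sequence `r_k = Γ(k+1)/Γ(αk+α)` is strictly decreasing for `k ≥ 1`. -/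
theorem gamma_ratio_strict_anti' (α : ℝ) (hα : 1 < α) (k : ℕ) (hk : 1 ≤ k) :
    Real.Gamma ((k : ℝ) + 2) / Real.Gamma (α * ((k : ℝ) + 1) + α) <
      Real.Gamma ((k : ℝ) + 1) / Real.Gamma (α * (k : ℝ) + α) := by
  have hk' : (1 : ℝ) ≤ k := by exact_mod_cast hk
  obtain ⟨x, hx⟩ : ∃ x, x = α * (k : ℝ) + α := ⟨_, rfl⟩
  have hxk : (k : ℝ) + 1 < x := by rw [hx]; nlinarith
  have e1 : α * ((k : ℝ) + 1) + α = x + α := by rw [hx]; ring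
  have e2 : (k : ℝ) + 2 = ((k : ℝ) + 1) + 1 := by ring
  rw [e1, ← hx, e2, Real.Gamma_add_one (by positivity)]
  have hG : 0 < Real.Gamma x := Real.Gamma_pos_of_pos (by linarith)
  have hG2 : 0 < Real.Gamma (x + α) := Real.Gamma_pos_of_pos (by linarith)
  have hGk : 0 < Real.Gamma ((k : ℝ) + 1) := Real.Gamma_pos_of_pos (by linarith)
  have h1 : Real.Gamma (x + 1) < Real.Gamma (x + α) :=
    Real.Gamma_strictMonoOn_Ici (Set.mem_Ici.2 (by linarith)) (Set.mem_Ici.2 (by linarith))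
      (by linarith)
  rw [Real.Gamma_add_one (by linarith)] at h1
  have h2 : ((k : ℝ) + 1) * Real.Gamma x < Real.Gamma (x + α) :=
    (mul_lt_mul_of_pos_right hxk hG).trans h1
  rw [div_lt_div_iff₀ hG2 hG]
  nlinarith [mul_lt_mul_of_pos_left h2 hGk]
end

section
/- Let α > 0, let b ∈ ℝ, and let s > 0 satisfy |b| < s^α. Then the Laplace transform of t ↦ E_α(b t^α) satisfies ∫_0^∞ e^{-st} E_α(b t^α) dt = s^{α-1} / (s^α - b). -/
lemma ml_term_eq (α c s t : ℝ) (k : ℕ) (ht : 0 < t) :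
    Real.exp (-(s * t)) * ((c * t ^ α) ^ k / Real.Gamma (α * k + 1)) =
      c ^ k / Real.Gamma (α * k + 1) * (t ^ (α * k + 1 - 1) * Real.exp (-(s * t))) := by
  rw [add_sub_cancel_right, Real.rpow_mul ht.le, Real.rpow_natCast, mul_pow]
  ring

lemma ml_integral (α c s : ℝ) (k : ℕ) (hα : 0 < α) (hs : 0 < s) :
    ∫ t in Set.Ioi (0 : ℝ),
      Real.exp (-(s * t)) * ((c * t ^ α) ^ k / Real.Gamma (α * k + 1)) =
      (c / s ^ α) ^ k * s⁻¹ := by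
  have hk : 0 < α * k + 1 := by positivity
  rw [MeasureTheory.setIntegral_congr_fun measurableSet_Ioi
    (fun t ht => ml_term_eq α c s t k ht), MeasureTheory.integral_const_mul,
    Real.integral_rpow_mul_exp_neg_mul_Ioi hk hs]
  have hG := (Real.Gamma_pos_of_pos hk).ne'
  have hsa : s ^ α ≠ 0 := (Real.rpow_pos_of_pos hs α).ne'
  rw [one_div, Real.inv_rpow hs.le, Real.rpow_add hs, Real.rpow_one, Real.rpow_mul hs.le,
    Real.rpow_natCast, div_pow]
  field_simp

lemma ml_integrable (α c s : ℝ) (k : ℕ) (hα : 0 < α) (hs : 0 < s) :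
    MeasureTheory.IntegrableOn (fun t : ℝ =>
      Real.exp (-(s * t)) * ((c * t ^ α) ^ k / Real.Gamma (α * k + 1))) (Set.Ioi 0) := by
  have hk : 0 ≤ α * k := by positivity
  rw [MeasureTheory.integrableOn_congr_fun (s := Set.Ioi (0 : ℝ))
    (fun t (ht : t ∈ Set.Ioi (0 : ℝ)) => ml_term_eq α c s t k ht) measurableSet_Ioi]
  apply MeasureTheory.Integrable.const_mul
  have := integrableOn_rpow_mul_exp_neg_mul_rpow (p := 1) (s := α * k) (b := s)
    (by linarith) one_pos hs
  simpa [MeasureTheory.IntegrableOn] using this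

/-- Laplace transform of the one-parameter Mittag-Leffler function:
for `α > 0`, `b ∈ ℝ`, `s > 0` with `|b| < s^α`,
`∫_0^∞ e^{-st} E_α(b t^α) dt = s^{α-1}/(s^α - b)`. -/
theorem laplace_mittagLeffler (α b s : ℝ) (hα : 0 < α) (hs : 0 < s) (hb : |b| < s ^ α) :
    ∫ t in Set.Ioi (0 : ℝ),
        Real.exp (-(s * t)) * ∑' k : ℕ, (b * t ^ α) ^ k / Real.Gamma (α * k + 1) =
      s ^ (α - 1) / (s ^ α - b) := by
  have hsa : 0 < s ^ α := Real.rpow_pos_of_pos hs α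
  have hr : |b| / s ^ α < 1 := (div_lt_one hsa).2 hb
  have hr' : |b / s ^ α| < 1 := by rwa [abs_div, abs_of_pos hsa]
  simp_rw [← tsum_mul_left]
  have hnorm : ∀ k : ℕ, ∫ t in Set.Ioi (0 : ℝ),
      ‖Real.exp (-(s * t)) * ((b * t ^ α) ^ k / Real.Gamma (α * k + 1))‖ =
      (|b| / s ^ α) ^ k * s⁻¹ := by
    intro k
    rw [← ml_integral α |b| s k hα hs]
    apply MeasureTheory.setIntegral_congr_fun measurableSet_Ioi
    intro t ht
    have hk : 0 < α * k + 1 := by positivity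
    have h1 : 0 < t ^ α := Real.rpow_pos_of_pos ht α
    simp only [Real.norm_eq_abs, abs_mul, abs_div, abs_pow, Real.abs_exp, abs_of_pos h1,
      abs_of_pos (Real.Gamma_pos_of_pos hk)]
  have key := MeasureTheory.hasSum_integral_of_summable_integral_norm
    (μ := MeasureTheory.volume.restrict (Set.Ioi (0 : ℝ)))
    (F := fun (k : ℕ) (t : ℝ) =>
      Real.exp (-(s * t)) * ((b * t ^ α) ^ k / Real.Gamma (α * k + 1)))
    (fun k => ml_integrable α b s k hα hs)
    (by
      simp_rw [hnorm]
      exact (summable_geometric_of_lt_one (by positivity) hr).mul_right _)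
  rw [← key.tsum_eq]
  simp_rw [ml_integral α b s _ hα hs]
  rw [tsum_mul_right, tsum_geometric_of_abs_lt_one hr', Real.rpow_sub hs, Real.rpow_one]
  have h2 : s ^ α - b ≠ 0 := by
    have := le_abs_self b
    exact (by linarith : 0 < s ^ α - b).ne'
  have h3 : 1 - b / s ^ α ≠ 0 := by
    have := le_abs_self (b / s ^ α)
    exact (by linarith : 0 < 1 - b / s ^ α).ne'
  field_simp
end

section
/- Let α > 0, let b ∈ ℝ, and let s > 0 satisfy |b| < s^α. Then ∫_0^∞ e^{-st} t^{α-1} E_{α,α}(-b t^α) dt = 1 / (s^α + b). -/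
/-- Laplace transform of `t ↦ t^{α-1} E_{α,α}(-b t^α)`:
for `α > 0`, `b ∈ ℝ`, `s > 0` with `|b| < s^α`,
`∫_0^∞ e^{-st} t^{α-1} E_{α,α}(-b t^α) dt = 1/(s^α + b)`. -/
theorem laplace_mittagLeffler_two_param (α b s : ℝ) (hα : 0 < α) (hs : 0 < s)
    (hb : |b| < s ^ α) :
    ∫ t in Set.Ioi (0 : ℝ),
        Real.exp (-(s * t)) * (t ^ (α - 1) *
          ∑' k : ℕ, (-(b * t ^ α)) ^ k / Real.Gamma (α * k + α)) =
      1 / (s ^ α + b) := by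
  have hsα : 0 < s ^ α := Real.rpow_pos_of_pos hs α
  have hapos : ∀ k : ℕ, 0 < α * k + α := fun k => by positivity
  have hG : ∀ k : ℕ, 0 < Real.Gamma (α * k + α) := fun k => Real.Gamma_pos_of_pos (hapos k)
  have hbase : ∀ k : ℕ, ∫ t in Set.Ioi (0 : ℝ), t ^ (α * k + α - 1) * Real.exp (-(s * t)) =
      (1 / s) ^ (α * k + α) * Real.Gamma (α * k + α) := fun k =>
    Real.integral_rpow_mul_exp_neg_mul_Ioi (hapos k) hs
  have hpow : ∀ k : ℕ, (1 / s) ^ (α * k + α) = (s ^ α)⁻¹ ^ k * (s ^ α)⁻¹ := fun k => by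
    have h1 : (0 : ℝ) < 1 / s := by positivity
    rw [Real.rpow_add h1, Real.rpow_mul h1.le, Real.rpow_natCast, one_div, Real.inv_rpow hs.le]
  have hbint : ∀ k : ℕ, MeasureTheory.Integrable
      (fun t : ℝ => t ^ (α * k + α - 1) * Real.exp (-(s * t)))
      (MeasureTheory.volume.restrict (Set.Ioi (0 : ℝ))) := fun k => by
    apply MeasureTheory.Integrable.of_integral_ne_zero
    rw [hbase k]
    have := hG k
    positivity
  let F : ℕ → ℝ → ℝ := fun k t =>
    (-b) ^ k / Real.Gamma (α * k + α) * (t ^ (α * k + α - 1) * Real.exp (-(s * t)))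
  have hFint : ∀ k, MeasureTheory.Integrable (F k)
      (MeasureTheory.volume.restrict (Set.Ioi (0 : ℝ))) := fun k => (hbint k).const_mul _
  have hFval : ∀ k, ∫ t in Set.Ioi (0 : ℝ), F k t = (-b / s ^ α) ^ k * (s ^ α)⁻¹ := fun k => by
    simp only [F]
    rw [MeasureTheory.integral_const_mul, hbase k, hpow k, div_pow, inv_pow]
    have := (hG k).ne'
    field_simp
  have hFnorm : ∀ k, ∫ t in Set.Ioi (0 : ℝ), ‖F k t‖ = (|b| / s ^ α) ^ k * (s ^ α)⁻¹ := fun k => by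
    have : ∫ t in Set.Ioi (0 : ℝ), ‖F k t‖ = ∫ t in Set.Ioi (0 : ℝ),
        |b| ^ k / Real.Gamma (α * k + α) * (t ^ (α * k + α - 1) * Real.exp (-(s * t))) := by
      apply MeasureTheory.setIntegral_congr_fun measurableSet_Ioi
      intro t ht
      have ht' : 0 < t := ht
      simp only [F, Real.norm_eq_abs]
      rw [abs_mul, abs_div, abs_pow, abs_neg, abs_of_pos (hG k),
        abs_of_pos (a := t ^ (α * k + α - 1) * Real.exp (-(s * t))) (by positivity)]
    rw [this, MeasureTheory.integral_const_mul, hbase k, hpow k, div_pow, inv_pow]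
    have := (hG k).ne'
    field_simp
  have hr : |b| / s ^ α < 1 := (div_lt_one hsα).2 hb
  have hsum : Summable fun k => ∫ t in Set.Ioi (0 : ℝ), ‖F k t‖ := by
    simp_rw [hFnorm]
    exact (summable_geometric_of_lt_one (by positivity) hr).mul_right _
  have key := MeasureTheory.integral_tsum_of_summable_integral_norm hFint hsum
  have hcongr : ∫ t in Set.Ioi (0 : ℝ),
        Real.exp (-(s * t)) * (t ^ (α - 1) *
          ∑' k : ℕ, (-(b * t ^ α)) ^ k / Real.Gamma (α * k + α)) =
      ∫ t in Set.Ioi (0 : ℝ), ∑' k, F k t := by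
    apply MeasureTheory.setIntegral_congr_fun measurableSet_Ioi
    intro t ht
    have ht' : 0 < t := ht
    simp only [F]
    rw [← tsum_mul_left, ← tsum_mul_left]
    refine tsum_congr fun k => ?_
    have e : t ^ (α * k + α - 1) = (t ^ α) ^ k * t ^ (α - 1) := by
      rw [add_sub_assoc, Real.rpow_add ht', Real.rpow_mul ht'.le, Real.rpow_natCast]
    rw [e, ← neg_mul b, mul_pow]
    ring
  rw [hcongr, ← key]
  simp_rw [hFval]
  have hr' : ‖-b / s ^ α‖ < 1 := by
    rw [Real.norm_eq_abs, abs_div, abs_neg, abs_of_pos hsα]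
    exact hr
  rw [tsum_mul_right, tsum_geometric_of_norm_lt_one hr', ← mul_inv, one_div]
  congr 1
  field_simp
  ring
end

section
/- Let 0 < α ≤ 1 and β ≥ α be real numbers. Then the function h(x) = E_{α,β}(−x) is smooth on (0,∞) and completely monotone: for every integer n ≥ 0 and every x > 0, (−1)^n h^{(n)}(x) ≥ 0, where h^{(n)} denotes the n-th derivative. -/
open Filter Topology

/-- Coefficient of `z^N` in `(1-z)^(-γ)`. -/
noncomputable def mlA (N : ℕ) (γ : ℝ) : ℝ := (∏ j ∈ Finset.range N, (γ + j)) / N.factorial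

lemma mlA_zero (γ : ℝ) : mlA 0 γ = 1 := by simp [mlA]

lemma mlA_succ (N : ℕ) (γ : ℝ) : (N + 1) * mlA (N + 1) γ = mlA N γ * (γ + N) := by
  have h : (N.factorial : ℝ) ≠ 0 := by positivity
  have h1 : (N + 1 : ℝ) ≠ 0 := by positivity
  simp only [mlA, Finset.prod_range_succ, Nat.factorial_succ]
  push_cast
  field_simp

lemma mlA_nonneg (N : ℕ) {γ : ℝ} (h : 0 ≤ γ) : 0 ≤ mlA N γ := by
  unfold mlA
  positivity

lemma mlA_le (N : ℕ) {γ : ℝ} (h : 0 ≤ γ) : mlA N γ ≤ (1 + γ) ^ N := by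
  induction N with
  | zero => simp [mlA_zero]
  | succ N ih =>
    have h1 : (0 : ℝ) < N + 1 := by positivity
    have h2 := mlA_succ N γ
    have h3 : (N + 1) * mlA (N + 1) γ ≤ (N + 1) * (1 + γ) ^ (N + 1) := by
      rw [h2, pow_succ]
      calc mlA N γ * (γ + N) ≤ (1 + γ) ^ N * ((N + 1) * (1 + γ)) := by
            apply mul_le_mul ih _ (by positivity) (by positivity)
            nlinarith [Nat.cast_nonneg (α := ℝ) N]
        _ = _ := by ring
    exact le_of_mul_le_mul_left h3 h1

lemma mlA_neg {α : ℝ} (h0 : 0 ≤ α) (h1 : α ≤ 1) (N : ℕ) : mlA (N + 1) (-α) ≤ 0 := by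
  unfold mlA
  apply div_nonpos_of_nonpos_of_nonneg _ (by positivity)
  rw [Finset.prod_range_succ']
  apply mul_nonpos_of_nonneg_of_nonpos
  · apply Finset.prod_nonneg
    intro i _
    push_cast
    have : (0:ℝ) ≤ i := by positivity
    linarith
  · simpa using h0

lemma mlA_multichoose (N : ℕ) (γ : ℝ) : Ring.multichoose γ N = mlA N γ := by
  have h := Ring.factorial_nsmul_multichoose_eq_ascPochhammer γ N
  rw [Polynomial.ascPochhammer_smeval_eq_eval] at h
  have h0 : (N.factorial : ℝ) ≠ 0 := by positivity
  have h2 : (ascPochhammer ℝ N).eval γ = ∏ j ∈ Finset.range N, (γ + j) := by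
    clear h h0
    induction N with
    | zero => simp
    | succ N ih => rw [ascPochhammer_succ_eval, Finset.prod_range_succ, ih]
  rw [mlA, ← h2, ← h]
  simp [h0]

lemma mlA_conv (N : ℕ) (γ δ : ℝ) :
    mlA N (γ + δ) = ∑ ij ∈ Finset.HasAntidiagonal.antidiagonal N, mlA ij.1 γ * mlA ij.2 δ := by
  have key : ∀ (M : ℕ) (c : ℝ), mlA M c = (-1) ^ M * Ring.choose (-c) M := by
    intro M c
    rw [Ring.choose_neg', mlA_multichoose, Units.smul_def, zsmul_eq_mul]
    simp [Int.negOnePow_def, ← mul_assoc, ← mul_pow]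
  rw [key, neg_add, Ring.add_choose_eq N (Commute.all _ _), Finset.mul_sum]
  refine Finset.sum_congr rfl fun ij hij => ?_
  rw [key, key, ← Finset.HasAntidiagonal.mem_antidiagonal.mp hij, pow_add]
  ring

lemma ml_summable (n m : ℕ) {a c ρ : ℝ} (ha : 0 ≤ a) (hc : 0 ≤ c) (h0 : 0 ≤ ρ) (h1 : ρ < 1) :
    Summable fun k : ℕ => ((n + k).choose k : ℝ) * (1 + (a * k + c)) ^ m * ρ ^ k := by
  have hs : Summable fun k : ℕ => ((k + 1 : ℝ)) ^ (n + m) * ρ ^ k := by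
    rcases h0.eq_or_lt with rfl | hp
    · refine summable_of_ne_finset_zero (s := {0}) fun k hk => ?_
      simp at hk
      simp [hk]
    have := (summable_nat_add_iff 1).2
      (summable_pow_mul_geometric_of_norm_lt_one (R := ℝ) (n + m) (r := ρ)
        (by rwa [Real.norm_of_nonneg h0]))
    refine (this.mul_right ρ⁻¹).congr fun k => ?_
    push_cast
    rw [pow_succ]
    field_simp
  refine Summable.of_nonneg_of_le (fun k => by positivity) (fun k => ?_)
    (hs.mul_left ((n + 1 : ℝ) ^ n * (1 + a + c) ^ m))
  have hk : (0:ℝ) ≤ k := by positivity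
  have e1 : ((n + k).choose k : ℝ) ≤ ((n + 1) * (k + 1)) ^ n := by
    rw [← Nat.choose_symm_add]
    have : (((n + k).choose n : ℕ) : ℝ) ≤ ((n + k : ℕ) : ℝ) ^ n := by
      exact_mod_cast Nat.choose_le_pow (n + k) n
    refine this.trans ?_
    gcongr
    push_cast
    nlinarith [Nat.cast_nonneg (α := ℝ) n]
  have e2 : (1 + (a * k + c)) ^ m ≤ ((1 + a + c) * (k + 1)) ^ m := by
    gcongr
    nlinarith [mul_nonneg hc hk]
  calc _ ≤ ((n + 1) * (k + 1)) ^ n * ((1 + a + c) * (k + 1)) ^ m * ρ ^ k := by gcongr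
    _ = _ := by rw [mul_pow, mul_pow, pow_add]; ring

/-- Discrete Mittag-Leffler derivative coefficients. -/
noncomputable def mlF (α l : ℝ) (n : ℕ) (c : ℝ) (N : ℕ) : ℝ :=
  ∑' k : ℕ, ((n + k).choose k : ℝ) * (-l) ^ k * mlA N (α * k + c)

lemma mlF_summable {α l : ℝ} (hα : 0 ≤ α) (h0 : 0 ≤ l) (h1 : l < 1) (n : ℕ) {c : ℝ} (hc : 0 ≤ c)
    (N : ℕ) : Summable fun k : ℕ => ((n + k).choose k : ℝ) * (-l) ^ k * mlA N (α * k + c) := by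
  refine Summable.of_norm_bounded (ml_summable n N hα hc h0 h1) fun k => ?_
  have h2 : 0 ≤ α * k + c := by positivity
  rw [norm_mul, norm_mul, norm_pow, norm_neg, Real.norm_of_nonneg h0,
    Real.norm_of_nonneg (mlA_nonneg N h2), Real.norm_of_nonneg (by positivity), mul_right_comm]
  gcongr
  exact mlA_le N h2

lemma mlF_conv {α l : ℝ} (hα : 0 ≤ α) (h0 : 0 ≤ l) (h1 : l < 1) (n : ℕ) {c : ℝ} (hc : 0 ≤ c)
    (N : ℕ) : ∑ ij ∈ Finset.HasAntidiagonal.antidiagonal N, mlA ij.1 (-α) * mlF α l n c ij.2 =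
      ∑' k : ℕ, ((n + k).choose k : ℝ) * (-l) ^ k * mlA N (α * k + (c - α)) := by
  simp only [mlF, ← tsum_mul_left]
  rw [← Summable.tsum_finsetSum]
  · refine tsum_congr fun k => ?_
    rw [show α * k + (c - α) = -α + (α * k + c) by ring, mlA_conv, Finset.mul_sum]
    exact Finset.sum_congr rfl fun ij _ => by ring
  · exact fun ij _ => (mlF_summable hα h0 h1 n hc ij.2).mul_left _

lemma ml_pos_of_conv {α l : ℝ} (hα : 0 ≤ α) (hα1 : α ≤ 1) (h0 : 0 ≤ l) (f : ℕ → ℝ)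
    (h : ∀ N, 0 ≤ l * f N + ∑ ij ∈ Finset.HasAntidiagonal.antidiagonal N, mlA ij.1 (-α) * f ij.2) (N : ℕ) :
    0 ≤ f N := by
  induction N using Nat.strong_induction_on with
  | _ N ih =>
    have hN := h N
    cases N with
    | zero =>
      simp [mlA_zero] at hN
      nlinarith
    | succ N =>
      rw [Finset.Nat.antidiagonal_succ, Finset.sum_cons, Finset.sum_map] at hN
      simp only [mlA_zero, one_mul] at hN
      have h2 : ∑ x ∈ Finset.HasAntidiagonal.antidiagonal N, mlA (x.1 + 1) (-α) * f x.2 ≤ 0 := by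
        refine Finset.sum_nonpos fun x hx => ?_
        have := Finset.HasAntidiagonal.mem_antidiagonal.mp hx
        exact mul_nonpos_of_nonpos_of_nonneg (mlA_neg hα hα1 _) (ih _ (by omega))
      have h3 : 0 ≤ (l + 1) * f (N + 1) := by
        simp at hN
        linarith
      exact nonneg_of_mul_nonneg_right h3 (by linarith)

lemma mlF_nonneg {α l : ℝ} (hα : 0 ≤ α) (hα1 : α ≤ 1) (h0 : 0 ≤ l) (h1 : l < 1) (n : ℕ) :
    ∀ c : ℝ, α * (n + 1) ≤ c → ∀ N, 0 ≤ mlF α l n c N := by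
  induction n with
  | zero =>
    intro c hc
    simp at hc
    apply ml_pos_of_conv hα hα1 h0
    intro N
    have hc0 : 0 ≤ c := hα.trans hc
    have hs := mlF_summable hα h0 h1 0 (sub_nonneg.2 hc) N
    rw [mlF_conv hα h0 h1 0 hc0, hs.tsum_eq_zero_add, mlF, ← tsum_mul_left]
    have : ∀ k : ℕ, l * (((0 + k).choose k : ℝ) * (-l) ^ k * mlA N (α * k + c)) =
       - (((0 + (k + 1)).choose (k + 1) : ℝ) * (-l) ^ (k + 1) *
        mlA N (α * (k + 1 : ℕ) + (c - α))) := by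
      intro k
      rw [show α * ((k + 1 : ℕ) : ℝ) + (c - α) = α * k + c by push_cast; ring]
      simp [pow_succ]
      ring
    rw [tsum_congr this, tsum_neg]
    simp
    exact mlA_nonneg N (by linarith)
  | succ n ih =>
    intro c hc
    apply ml_pos_of_conv hα hα1 h0
    intro N
    push_cast at hc
    have hn : (0:ℝ) ≤ n := by positivity
    have hca : α * (n + 1) ≤ c - α := by linarith
    have hca0 : 0 ≤ c - α := le_trans (by positivity) hca
    have hc0 : 0 ≤ c := by linarith
    have hs := mlF_summable hα h0 h1 (n + 1) hca0 N
    have hs' := mlF_summable hα h0 h1 n hca0 N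
    have goal := ih (c - α) hca N
    rw [mlF, hs'.tsum_eq_zero_add] at goal
    rw [mlF_conv hα h0 h1 (n + 1) hc0, hs.tsum_eq_zero_add, mlF, ← tsum_mul_left]
    rw [add_left_comm, ← Summable.tsum_add ((mlF_summable hα h0 h1 (n + 1) hc0 N).mul_left l)
      ((summable_nat_add_iff 1).2 hs)]
    convert goal using 2
    · simp
    · refine tsum_congr fun k => ?_
      rw [show α * ((k + 1 : ℕ) : ℝ) + (c - α) = α * k + c by push_cast; ring]
      have : (n + 1 + (k + 1)).choose (k + 1) = (n + 1 + k).choose k + (n + (k + 1)).choose (k + 1) := by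
        rw [show n + 1 + (k + 1) = (n + 1 + k) + 1 by ring, Nat.choose_succ_succ,
          show n + (k + 1) = n + 1 + k by ring]
      rw [this]
      push_cast
      ring

/-- `1 / GammaSeq`. -/
noncomputable def mlD (N : ℕ) (γ : ℝ) : ℝ := (N + 1) * mlA (N + 1) γ * (N : ℝ) ^ (-γ)

lemma mlD_eq (N : ℕ) (hN : 0 < N) (γ : ℝ) : mlD N γ = (Real.GammaSeq γ N)⁻¹ := by
  have h0 : (N.factorial : ℝ) ≠ 0 := by positivity
  have h1 : (N + 1 : ℝ) ≠ 0 := by positivity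
  have hN' : (0:ℝ) < N := by exact_mod_cast hN
  rw [mlD, mlA, Real.GammaSeq, Real.rpow_neg hN'.le, Nat.factorial_succ]
  push_cast
  have : (N:ℝ) ^ γ ≠ 0 := by positivity
  field_simp

lemma mlD_nonneg (N : ℕ) {γ : ℝ} (h : 0 ≤ γ) : 0 ≤ mlD N γ := by
  have := mlA_nonneg (N + 1) h
  unfold mlD
  positivity

lemma mlD_step (N : ℕ) (hN : 0 < N) {γ : ℝ} (h : 0 ≤ γ) : mlD (N + 1) γ ≤ mlD N γ := by
  have hN' : (0:ℝ) < N := by exact_mod_cast hN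
  have hA := mlA_nonneg (N + 1) h
  have h2 := mlA_succ (N + 1) γ
  push_cast at h2
  have hlog : 1 / (N + 1 : ℝ) ≤ Real.log ((N + 1) / N) := by
    have := Real.one_sub_inv_le_log_of_pos (x := (N + 1 : ℝ) / N) (by positivity)
    refine le_trans (le_of_eq ?_) this
    field_simp
    ring
  have hb : 1 + γ / (N + 1) ≤ ((N + 1 : ℝ) / N) ^ γ := by
    rw [Real.rpow_def_of_pos (by positivity)]
    have := Real.add_one_le_exp (Real.log ((N + 1 : ℝ) / N) * γ)
    have h3 := mul_le_mul_of_nonneg_right hlog h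
    have h4 : γ / (N + 1) = 1 / (N + 1 : ℝ) * γ := by ring
    linarith
  rw [Real.div_rpow (by positivity) hN'.le] at hb
  unfold mlD
  push_cast
  rw [h2, Real.rpow_neg (by positivity), Real.rpow_neg hN'.le]
  have p1 : 0 < (N + 1 : ℝ) ^ γ := by positivity
  have p2 : 0 < (N : ℝ) ^ γ := by positivity
  rw [← div_eq_mul_inv, ← div_eq_mul_inv, div_le_div_iff₀ p1 p2]
  rw [le_div_iff₀ p2] at hb
  have h5 : γ + (N + 1) = (N + 1) * (1 + γ / (N + 1)) := by field_simp; ring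
  rw [h5]
  have := mul_le_mul_of_nonneg_left hb (show 0 ≤ (N + 1) * mlA (N + 1) γ by positivity)
  linarith

lemma mlD_anti {N M : ℕ} (hN : 0 < N) (hNM : N ≤ M) {γ : ℝ} (h : 0 ≤ γ) : mlD M γ ≤ mlD N γ := by
  induction M, hNM using Nat.le_induction with
  | base => exact le_rfl
  | succ M hM ih => exact (mlD_step M (by omega) h).trans ih

lemma mlD_tendsto {γ : ℝ} (h : 0 < γ) :
    Tendsto (fun N => mlD N γ) atTop (𝓝 (Real.Gamma γ)⁻¹) := by
  refine ((Real.GammaSeq_tendsto_Gamma γ).inv₀ (Real.Gamma_pos_of_pos h).ne').congr' ?_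
  filter_upwards [eventually_gt_atTop 0] with N hN
  exact (mlD_eq N hN γ).symm

lemma mlD_le (N : ℕ) {γ : ℝ} (h : 0 ≤ γ) :
    mlD N γ ≤ (N + 1) * (1 + γ) ^ (N + 1) * (N : ℝ) ^ (-γ) := by
  unfold mlD
  gcongr
  exact mlA_le _ h

/-- normalised coefficient -/
noncomputable def mlB (N : ℕ) (γ : ℝ) : ℝ := (N : ℝ) ^ (1 - γ) * mlA N γ

lemma mlB_eq (N : ℕ) (hN : 0 < N) {γ : ℝ} (h : 0 ≤ γ) : mlB N γ = mlD N γ * (N / (γ + N)) := by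
  have hN' : (0:ℝ) < N := by exact_mod_cast hN
  rw [mlB, mlD, mlA_succ, sub_eq_add_neg, Real.rpow_add hN', Real.rpow_one]
  have : γ + N ≠ 0 := by positivity
  field_simp

lemma mlB_nonneg (N : ℕ) {γ : ℝ} (h : 0 ≤ γ) : 0 ≤ mlB N γ := by
  have := mlA_nonneg N h
  unfold mlB
  positivity

lemma mlB_le (N : ℕ) (hN : 0 < N) {γ : ℝ} (h : 0 ≤ γ) : mlB N γ ≤ mlD N γ := by
  have hN' : (0:ℝ) < N := by exact_mod_cast hN
  rw [mlB_eq N hN h]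
  apply mul_le_of_le_one_right (mlD_nonneg N h)
  rw [div_le_one (by positivity)]
  linarith

lemma mlB_tendsto {γ : ℝ} (h : 0 < γ) :
    Tendsto (fun N => mlB N γ) atTop (𝓝 (Real.Gamma γ)⁻¹) := by
  have h1 : Tendsto (fun N : ℕ => (N : ℝ) / (γ + N)) atTop (𝓝 1) := by
    have := tendsto_natCast_div_add_atTop (𝕜 := ℝ) γ
    simpa [add_comm] using this
  have := (mlD_tendsto h).mul h1
  rw [mul_one] at this
  refine this.congr' ?_
  filter_upwards [eventually_gt_atTop 0] with N hN
  exact (mlB_eq N hN h.le).symm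

/-- Summable domination. -/
lemma mlD_summable {α : ℝ} (hα : 0 < α) (R : ℝ) (hR : 0 ≤ R) :
    ∃ N : ℕ, 0 < N ∧ R * (N : ℝ) ^ (-α) < 1 ∧ ∀ (n : ℕ) (c : ℝ), 0 ≤ c →
      Summable fun k : ℕ => ((n + k).choose k : ℝ) * R ^ k * mlD N (α * k + c) := by
  have ht : Tendsto (fun N : ℕ => R * (N : ℝ) ^ (-α)) atTop (𝓝 (R * 0)) :=
    ((tendsto_rpow_neg_atTop hα).comp tendsto_natCast_atTop_atTop).const_mul R
  rw [mul_zero] at ht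
  obtain ⟨N, hN1, hN⟩ := ((ht.eventually_lt_const one_pos).and (eventually_gt_atTop 0)).exists
  refine ⟨N, hN, hN1, fun n c hc => ?_⟩
  have hN' : (0:ℝ) < N := by exact_mod_cast hN
  have hs := (ml_summable n (N + 1) hα.le hc (ρ := R * (N : ℝ) ^ (-α)) (by positivity) hN1).mul_left
    ((N + 1) * (N : ℝ) ^ (-c))
  refine Summable.of_nonneg_of_le (fun k => ?_) (fun k => ?_) hs
  · have := mlD_nonneg N (γ := α * k + c) (by positivity)
    positivity
  · have := mlD_le N (γ := α * k + c) (by positivity)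
    calc _ ≤ ((n + k).choose k : ℝ) * R ^ k *
          ((N + 1) * (1 + (α * k + c)) ^ (N + 1) * (N : ℝ) ^ (-(α * k + c))) := by gcongr
      _ = _ := by
        rw [show -(α * k + c) = (-α) * k + -c by ring, Real.rpow_add hN', Real.rpow_mul hN'.le,
          Real.rpow_natCast, mul_pow]
        ring

lemma ml_inv_Gamma_le {N : ℕ} (hN : 0 < N) {γ : ℝ} (h : 0 < γ) : (Real.Gamma γ)⁻¹ ≤ mlD N γ :=
  le_of_tendsto (mlD_tendsto h) (by
    filter_upwards [eventually_ge_atTop N] with M hM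
    exact mlD_anti hN hM h.le)

/-- Taylor series of the Mittag-Leffler derivative. -/
noncomputable def mlG (α c : ℝ) (n : ℕ) (y : ℝ) : ℝ :=
  ∑' k : ℕ, ((n + k).choose k : ℝ) * y ^ k * (Real.Gamma (α * k + (α * n + c)))⁻¹

lemma mlG_summable {α c : ℝ} (hα : 0 < α) (hc : 0 < c) (n : ℕ) {R : ℝ} (hR : 0 ≤ R) :
    Summable fun k : ℕ =>
      ((n + k).choose k : ℝ) * R ^ k * (Real.Gamma (α * k + (α * n + c)))⁻¹ := by
  obtain ⟨N, hN, -, hs⟩ := mlD_summable hα R hR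
  refine Summable.of_nonneg_of_le (fun k => ?_) (fun k => ?_) (hs n (α * n + c) (by positivity))
  · have := Real.Gamma_pos_of_pos (s := α * k + (α * n + c)) (by positivity)
    positivity
  · gcongr
    exact ml_inv_Gamma_le hN (by positivity)

lemma mlG_nonneg {α c : ℝ} (hα : 0 < α) (hα1 : α ≤ 1) (hc : α ≤ c) (n : ℕ) {x : ℝ} (hx : 0 < x) :
    0 ≤ mlG α c n (-x) := by
  obtain ⟨N, hN, hN1, hs⟩ := mlD_summable hα x hx.le
  have hc0 : 0 < c := hα.trans_le hc
  have ht : Tendsto (fun M : ℕ => ∑' k : ℕ, ((n + k).choose k : ℝ) * (-x) ^ k *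
      mlB M (α * k + (α * n + c))) atTop (𝓝 (mlG α c n (-x))) := by
    refine tendsto_tsum_of_dominated_convergence (hs n (α * n + c) (by positivity)) ?_ ?_
    · intro k
      exact (mlB_tendsto (by positivity)).const_mul _
    · filter_upwards [eventually_ge_atTop N] with M hM k
      have h2 : 0 ≤ α * k + (α * n + c) := by positivity
      rw [norm_mul, norm_mul, norm_pow, norm_neg, Real.norm_of_nonneg hx.le,
        Real.norm_of_nonneg (mlB_nonneg M h2), Real.norm_of_nonneg (by positivity)]
      gcongr
      exact (mlB_le M (by omega) h2).trans (mlD_anti hN hM h2)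
  refine ge_of_tendsto ht ?_
  filter_upwards [eventually_ge_atTop N] with M hM
  have hN' : (0:ℝ) < N := by exact_mod_cast hN
  have hM' : (0:ℝ) < M := by exact_mod_cast (show 0 < M by omega)
  have hl1 : x * (M : ℝ) ^ (-α) < 1 := by
    refine lt_of_le_of_lt ?_ hN1
    gcongr ?_ * ?_
    exact Real.rpow_le_rpow_of_nonpos hN' (by exact_mod_cast hM) (by linarith)
  have hF := mlF_nonneg hα.le hα1 (l := x * (M : ℝ) ^ (-α)) (by positivity) hl1 n (α * n + c)
    (by linarith) M
  have : ∑' k : ℕ, ((n + k).choose k : ℝ) * (-x) ^ k * mlB M (α * k + (α * n + c)) =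
      (M : ℝ) ^ (1 - (α * n + c)) * mlF α (x * (M : ℝ) ^ (-α)) n (α * n + c) M := by
    rw [mlF, ← tsum_mul_left]
    refine tsum_congr fun k => ?_
    rw [mlB, show 1 - (α * k + (α * n + c)) = (-α) * k + (1 - (α * n + c)) by ring,
      Real.rpow_add hM', Real.rpow_mul hM'.le, Real.rpow_natCast, ← neg_mul, mul_pow]
    ring
  rw [this]
  positivity

lemma mlG_hasDerivAt {α c : ℝ} (hα : 0 < α) (hc : 0 < c) (n : ℕ) (y : ℝ) :
    HasDerivAt (mlG α c n) ((n + 1) * mlG α c (n + 1) y) y := by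
  set R : ℝ := |y| + 1 with hRdef
  have hR : 0 < R := by positivity
  have hid : ∀ (k : ℕ) (z : ℝ), ((n + (k + 1)).choose (k + 1) : ℝ) * (((k + 1 : ℕ) : ℝ) * z ^ k) *
      (Real.Gamma (α * (k + 1 : ℕ) + (α * n + c)))⁻¹ = (n + 1) * (((n + 1 + k).choose k : ℝ) *
      z ^ k * (Real.Gamma (α * k + (α * (n + 1 : ℕ) + c)))⁻¹) := by
    intro k z
    have e : ((n + (k + 1)).choose (k + 1) : ℝ) * ((k + 1 : ℕ) : ℝ) =
        (n + 1) * ((n + 1 + k).choose k : ℝ) := by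
      have := Nat.choose_succ_right_eq (n + 1 + k) k
      rw [show n + 1 + k - k = n + 1 by omega] at this
      rw [show n + (k + 1) = n + 1 + k by ring, mul_comm (n + 1 : ℝ)]
      exact_mod_cast this
    rw [show α * ((k + 1 : ℕ) : ℝ) + (α * n + c) = α * k + (α * (n + 1 : ℕ) + c) by
      push_cast; ring, ← mul_assoc, e]
    ring
  have hsum : Summable fun k : ℕ => ((n + k).choose k : ℝ) * ((k : ℝ) * R ^ (k - 1)) *
      (Real.Gamma (α * k + (α * n + c)))⁻¹ := by
    rw [← summable_nat_add_iff 1]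
    refine ((mlG_summable hα hc (n + 1) hR.le).mul_left ((n : ℝ) + 1)).congr fun k => ?_
    exact (hid k R).symm
  have hd := hasDerivAt_tsum_of_isPreconnected (𝕜 := ℝ) (y₀ := 0) (y := y) hsum
    (Metric.isOpen_ball (x := (0:ℝ)) (ε := R)) (convex_ball (0:ℝ) R).isPreconnected
    (g := fun k z => ((n + k).choose k : ℝ) * z ^ k * (Real.Gamma (α * k + (α * n + c)))⁻¹)
    (g' := fun k z => ((n + k).choose k : ℝ) * ((k : ℝ) * z ^ (k - 1)) *
      (Real.Gamma (α * k + (α * n + c)))⁻¹)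
    (fun k z _ => ((hasDerivAt_pow k z).const_mul _).mul_const _)
    (fun k z hz => by
      have hz' : |z| ≤ R := by
        have := mem_ball_zero_iff.1 hz
        exact this.le
      have := Real.Gamma_pos_of_pos (s := α * k + (α * n + c)) (by positivity)
      simp only [norm_mul, norm_pow, Real.norm_eq_abs, Nat.abs_cast, abs_inv, abs_of_pos this]
      gcongr)
    (Metric.mem_ball_self hR)
    (mlG_summable hα hc n le_rfl)
    (by rw [mem_ball_zero_iff, Real.norm_eq_abs]; linarith)
  convert! hd using 1
  rw [Summable.tsum_eq_zero_add, mlG, ← tsum_mul_left]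
  · simp only [Nat.cast_zero, zero_mul, mul_zero, zero_add, Nat.add_sub_cancel]
    exact tsum_congr fun k => (hid k y).symm
  · refine Summable.of_norm_bounded hsum fun k => ?_
    have := Real.Gamma_pos_of_pos (s := α * k + (α * n + c)) (by positivity)
    simp only [norm_mul, norm_pow, Real.norm_eq_abs, Nat.abs_cast, abs_inv, abs_of_pos this]
    gcongr
    linarith

/-- (Pollard/Schneider) For `0 < α ≤ 1` and `β ≥ α`, the function
`h(x) = E_{α,β}(−x) = ∑_k (−x)^k/Γ(αk+β)` is smooth on `(0,∞)` and completely
monotone there: `(−1)^n h^{(n)}(x) ≥ 0` for all `n ≥ 0`, `x > 0`. -/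
theorem mittagLeffler_completely_monotone (α β : ℝ) (hα : 0 < α) (hα1 : α ≤ 1)
    (hβ : α ≤ β) :
    ContDiffOn ℝ (⊤ : ℕ∞) (fun x : ℝ => ∑' k : ℕ, (-x) ^ k / Real.Gamma (α * k + β))
        (Set.Ioi 0) ∧
      ∀ n : ℕ, ∀ x : ℝ, 0 < x →
        0 ≤ (-1 : ℝ) ^ n *
          iteratedDerivWithin n
            (fun x : ℝ => ∑' k : ℕ, (-x) ^ k / Real.Gamma (α * k + β)) (Set.Ioi 0) x := by
  have hβ0 : 0 < β := hα.trans_le hβ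
  set h : ℝ → ℝ := fun x : ℝ => ∑' k : ℕ, (-x) ^ k / Real.Gamma (α * k + β) with hh
  have hG : ∀ (n : ℕ) (x : ℝ), HasDerivAt
      (fun x => (-1 : ℝ) ^ n * n.factorial * mlG α β n (-x))
      ((-1 : ℝ) ^ (n + 1) * (n + 1).factorial * mlG α β (n + 1) (-x)) x := by
    intro n x
    have h1 := ((mlG_hasDerivAt hα hβ0 n (-x)).comp x (hasDerivAt_neg x)).const_mul
      ((-1 : ℝ) ^ n * n.factorial)
    convert! h1 using 1
    rw [Nat.factorial_succ]
    push_cast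
    ring
  have hI : ∀ n : ℕ, iteratedDeriv n h =
      fun x => (-1 : ℝ) ^ n * n.factorial * mlG α β n (-x) := by
    intro n
    induction n with
    | zero =>
      ext x
      simp [hh, mlG, div_eq_mul_inv]
    | succ n ih =>
      rw [iteratedDeriv_succ, ih]
      ext x
      exact (hG n x).deriv
  have hsm : ContDiff ℝ (⊤ : ℕ∞) h := by
    apply contDiff_of_differentiable_iteratedDeriv
    intro m _
    rw [hI m]
    exact fun x => (hG m x).differentiableAt
  refine ⟨hsm.contDiffOn, fun n x hx => ?_⟩
  rw [iteratedDerivWithin_of_isOpen isOpen_Ioi (Set.mem_Ioi.2 hx), hI n]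
  have := mlG_nonneg hα hα1 hβ n hx
  have e : (-1 : ℝ) ^ n * ((-1 : ℝ) ^ n * n.factorial * mlG α β n (-x)) =
      n.factorial * mlG α β n (-x) := by
    rw [← mul_assoc, ← mul_assoc, ← mul_pow]
    simp
  show 0 ≤ (-1 : ℝ) ^ n * ((-1 : ℝ) ^ n * n.factorial * mlG α β n (-x))
  rw [e]
  positivity
end

section
/- Let 0 < α < 1 and α ≤ β ≤ 1 be real numbers. Then for every t > 0, t^{β−1} E_{α,β}(−t^α) = ∫_0^∞ e^{−st} K_{α,β}(s) ds, where K_{α,β}(s) = s^{α−β} [ sin((β−α)π) + s^α sin(βπ) ] / ( π [ s^{2α} + 2 s^α cos(απ) + 1 ] ). -/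
open Real

namespace MLProof
open MeasureTheory Filter Topology Set

/-- real decay function `exp(-t e^x) e^{a x}` -/
noncomputable def EE (t a x : ℝ) : ℝ := Real.exp (-(t * Real.exp x)) * Real.exp (a * x)

lemma exp_image : Real.exp '' Set.univ = Set.Ioi 0 := by
  rw [Set.image_univ, Real.range_exp]

lemma int_exp {E : Type*} [NormedAddCommGroup E] [NormedSpace ℝ E] (g : ℝ → E) :
    ∫ s in Set.Ioi (0:ℝ), g s = ∫ x : ℝ, Real.exp x • g (Real.exp x) := by
  rw [← exp_image, integral_image_eq_integral_abs_deriv_smul MeasurableSet.univ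
    (fun x _ => (Real.hasDerivAt_exp x).hasDerivWithinAt) Real.exp_injective.injOn]
  simp [abs_of_pos (Real.exp_pos _)]

lemma integrable_exp {E : Type*} [NormedAddCommGroup E] [NormedSpace ℝ E] (g : ℝ → E) :
    IntegrableOn g (Set.Ioi (0:ℝ)) ↔ Integrable (fun x : ℝ => Real.exp x • g (Real.exp x)) := by
  rw [← exp_image, integrableOn_image_iff_integrableOn_abs_deriv_smul MeasurableSet.univ
    (fun x _ => (Real.hasDerivAt_exp x).hasDerivWithinAt) Real.exp_injective.injOn]
  simp [abs_of_pos (Real.exp_pos _)]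

lemma EE_eq (t a x : ℝ) : EE t a x = Real.exp x • ((Real.exp x) ^ (a - 1) * Real.exp (-(t * Real.exp x))) := by
  have h : Real.exp (a * x) = Real.exp x * Real.exp (x * (a - 1)) := by
    rw [← Real.exp_add]; ring_nf
  rw [EE, ← Real.exp_mul, smul_eq_mul, h]
  ring

lemma EE_integrable {t a : ℝ} (ht : 0 < t) (ha : 0 < a) : Integrable (EE t a) := by
  have h := integrableOn_rpow_mul_exp_neg_mul_rpow (s := a - 1) (by linarith) one_pos ht
  rw [integrable_exp] at h
  refine h.congr (Eventually.of_forall fun x => ?_)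
  simp only [EE_eq, Real.rpow_one, neg_mul]

lemma EE_integral {t a : ℝ} (ht : 0 < t) (ha : 0 < a) :
    ∫ x, EE t a x = (1 / t) ^ a * Real.Gamma a := by
  rw [← Real.integral_rpow_mul_exp_neg_mul_Ioi ha ht, int_exp]
  simp only [EE_eq]

lemma EE_pos (t a x : ℝ) : 0 < EE t a x := by unfold EE; positivity

lemma EE_cont (t a : ℝ) : Continuous (EE t a) := by unfold EE; fun_prop

lemma EE_mono {t a b x : ℝ} (hab : a ≤ b) (hx : 0 ≤ x) : EE t a x ≤ EE t b x := by
  unfold EE; gcongr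

lemma EE_integrableOn {t : ℝ} (a : ℝ) (ht : 0 < t) : IntegrableOn (EE t a) (Set.Ioi 1) := by
  have h := (EE_integrable (a := max a 1) ht (by positivity)).integrableOn (s := Set.Ioi 1)
  refine Integrable.mono' h (EE_cont t a).aestronglyMeasurable ?_
  refine (ae_restrict_iff' measurableSet_Ioi).2 (Eventually.of_forall fun x hx => ?_)
  rw [Real.norm_of_nonneg (EE_pos _ _ _).le]
  exact EE_mono (le_max_left _ _) (by linarith [Set.mem_Ioi.1 hx])

lemma EE_tendsto {t : ℝ} (a : ℝ) (ht : 0 < t) : Tendsto (EE t a) atTop (𝓝 0) := by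
  have h := (tendsto_rpow_mul_exp_neg_mul_atTop_nhds_zero a t ht).comp Real.tendsto_exp_atTop
  refine h.congr fun x => ?_
  simp only [Function.comp, EE, ← Real.exp_mul]
  rw [mul_comm]; congr 2 <;> ring

/-- jump across the strip -/
noncomputable def DD (F : ℂ → ℂ) (x : ℝ) : ℂ :=
  (F (x + (π : ℝ) * Complex.I) - F (x + (-π : ℝ) * Complex.I)) / Complex.I

/-- Hankel type integral -/
noncomputable def HH (F : ℂ → ℂ) : ℂ :=
  (∫ y in (-π)..π, F ((1:ℝ) + y * Complex.I)) + ∫ x in Set.Ioi (1:ℝ), DD F x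

lemma contour (F : ℂ → ℂ) (v : ℂ) (hd : DifferentiableOn ℂ F {z | |z.im| ≤ π})
    (hD : Integrable (DD F))
    (hv : Tendsto (fun M : ℝ => ∫ y in (-π)..π, F (M + y * Complex.I)) atBot (𝓝 v)) :
    HH F = v + ∫ x, DD F x := by
  have hpi := Real.pi_pos
  have key : ∀ M : ℝ, (∫ y in (-π)..π, F (M + y * Complex.I)) + ∫ x in M..1, DD F x
      = ∫ y in (-π)..π, F ((1:ℝ) + y * Complex.I) := by
    intro M
    have hcont : ∀ a : ℝ, |a| ≤ π → Continuous (fun x : ℝ => F (x + a * Complex.I)) := by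
      intro a ha
      refine hd.continuousOn.comp_continuous (by fun_prop) fun x => ?_
      simpa using ha
    have hr := Complex.integral_boundary_rect_eq_zero_of_differentiableOn F
      (⟨M, -π⟩ : ℂ) (⟨1, π⟩ : ℂ) (hd.mono (by
        intro z hz
        have h2 := hz.2
        simp only [mem_preimage] at h2
        rw [Set.uIcc_of_le (by linarith)] at h2
        exact abs_le.2 h2))
    simp only [smul_eq_mul] at hr
    have e : ∫ x in M..1, DD F x = ((∫ x : ℝ in M..1, F (x + (π:ℝ) * Complex.I))
        - ∫ x : ℝ in M..1, F (x + (-π:ℝ) * Complex.I)) / Complex.I := by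
      unfold DD
      rw [intervalIntegral.integral_div, intervalIntegral.integral_sub]
      · exact (hcont π (abs_of_pos hpi).le).intervalIntegrable _ _
      · exact (hcont (-π) (by rw [abs_neg]; exact (abs_of_pos hpi).le)).intervalIntegrable _ _
    rw [e]
    have hI := Complex.I_ne_zero
    generalize (∫ x : ℝ in M..1, F (x + (π:ℝ) * Complex.I)) = a1 at *
    generalize (∫ x : ℝ in M..1, F (x + (-π:ℝ) * Complex.I)) = a2 at *
    generalize (∫ y in (-π)..π, F (M + y * Complex.I)) = a3 at *
    generalize (∫ y in (-π)..π, F ((1:ℝ) + y * Complex.I)) = a4 at *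
    field_simp
    linear_combination -hr
  have h1 := intervalIntegral_tendsto_integral_Iic (μ := volume) (f := DD F) (1:ℝ) hD.integrableOn
    (tendsto_id (α := ℝ) (x := atBot))
  have h2 := hv.add h1
  simp only [id] at h2
  have h3 := tendsto_nhds_unique h2 (tendsto_const_nhds.congr fun M => (key M).symm)
  rw [HH, ← h3, add_assoc, ← integral_add_compl (measurableSet_Iic (a := (1:ℝ))) hD, compl_Iic]

noncomputable def Fc (t c : ℝ) (z : ℂ) : ℂ :=
  Complex.exp (t * Complex.exp z) * Complex.exp ((1 - c : ℝ) * z)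

noncomputable def FF (t α β : ℝ) (z : ℂ) : ℂ :=
  Complex.exp (t * Complex.exp z) * Complex.exp ((1 + α - β : ℝ) * z) / (Complex.exp (α * z) + 1)

lemma Fc_diff (t c : ℝ) : Differentiable ℂ (Fc t c) := by unfold Fc; fun_prop

lemma vert (F : ℂ → ℂ) (v : ℂ) (C : ℝ)
    (hm : ∀ M : ℝ, ContinuousOn (fun y : ℝ => F (M + y * Complex.I)) (Set.Icc (-π) π))
    (hb : ∀ᶠ M : ℝ in atBot, ∀ y : ℝ, ‖F (M + y * Complex.I)‖ ≤ C)
    (hl : ∀ y : ℝ, Tendsto (fun M : ℝ => F (M + y * Complex.I)) atBot (𝓝 v)) :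
    Tendsto (fun M : ℝ => ∫ y in (-π)..π, F (M + y * Complex.I)) atBot (𝓝 (2 * π * v)) := by
  have hpi := Real.pi_pos
  have := intervalIntegral.tendsto_integral_filter_of_dominated_convergence (μ := volume)
    (a := -π) (b := π) (l := (atBot : Filter ℝ)) (F := fun M y => F (M + y * Complex.I))
    (f := fun _ => v) (fun _ => C) ?_ ?_ ?_ ?_
  · convert this using 2
    rw [intervalIntegral.integral_const, Complex.real_smul]
    push_cast
    ring
  · refine Eventually.of_forall fun M => ?_
    rw [Set.uIoc_of_le (by linarith)]
    exact ((hm M).mono Set.Ioc_subset_Icc_self).aestronglyMeasurable measurableSet_Ioc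
  · filter_upwards [hb] with M hM
    exact Eventually.of_forall fun y _ => hM y
  · simp
  · exact Eventually.of_forall fun y _ => hl y

lemma exp_lim (a : ℝ) (ha : 0 < a) (y : ℝ) :
    Tendsto (fun M : ℝ => Complex.exp ((a:ℝ) * (M + y * Complex.I))) atBot (𝓝 0) := by
  rw [tendsto_zero_iff_norm_tendsto_zero]
  simp only [Complex.norm_exp]
  simp
  exact tendsto_id.const_mul_atBot ha

lemma expexp_lim (t : ℝ) (y : ℝ) :
    Tendsto (fun M : ℝ => Complex.exp (t * Complex.exp (M + y * Complex.I))) atBot (𝓝 1) := by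
  have h := exp_lim 1 one_pos y
  simp only [Complex.ofReal_one, one_mul] at h
  have h2 := (Complex.continuous_exp.tendsto _).comp (h.const_mul (t:ℂ))
  simpa [Function.comp_def] using h2

lemma expexp_norm {t : ℝ} (ht : 0 < t) {M : ℝ} (y : ℝ) :
    ‖Complex.exp (t * Complex.exp (M + y * Complex.I))‖ ≤ Real.exp (t * Real.exp M) := by
  rw [Complex.norm_exp]
  gcongr
  refine (Complex.re_le_norm _).trans ?_
  rw [norm_mul, Complex.norm_exp]
  simp [abs_of_pos ht]

lemma lin_norm (a M y : ℝ) :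
    ‖Complex.exp ((a:ℝ) * (M + y * Complex.I))‖ = Real.exp (a * M) := by
  rw [Complex.norm_exp]; simp

lemma expexp_norm' {t : ℝ} (ht : 0 < t) {M : ℝ} (hM : M ≤ 0) (y : ℝ) :
    ‖Complex.exp (t * Complex.exp (M + y * Complex.I))‖ ≤ Real.exp t := by
  refine (expexp_norm ht y).trans ?_
  gcongr
  have := Real.exp_le_one_iff.2 hM
  nlinarith

lemma lin_norm' {a M : ℝ} (ha : 0 ≤ a) (hM : M ≤ 0) (y : ℝ) :
    ‖Complex.exp ((a:ℝ) * (M + y * Complex.I))‖ ≤ 1 := by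
  rw [lin_norm, Real.exp_le_one_iff]
  exact mul_nonpos_of_nonneg_of_nonpos ha hM

lemma exp_pi (x : ℝ) : Complex.exp (x + (π : ℝ) * Complex.I) = -(Real.exp x : ℂ) := by
  rw [Complex.exp_add, Complex.exp_pi_mul_I]; push_cast; ring

lemma exp_neg_pi (x : ℝ) : Complex.exp (x + (-π : ℝ) * Complex.I) = -(Real.exp x : ℂ) := by
  rw [Complex.exp_add, Complex.ofReal_neg, neg_mul, Complex.exp_neg, Complex.exp_pi_mul_I]
  push_cast; norm_num

lemma exp_lin (a x y : ℝ) : Complex.exp ((a:ℝ) * (x + y * Complex.I)) =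
    (Real.exp (a * x) : ℂ) * (Real.cos (a * y) + Real.sin (a * y) * Complex.I) := by
  rw [mul_add, Complex.exp_add, ← mul_assoc]
  push_cast
  rw [Complex.exp_mul_I]

lemma DD_Fc (t c x : ℝ) : DD (Fc t c) x = ((2 * Real.sin (π * c) * EE t (1 - c) x : ℝ) : ℂ) := by
  unfold DD Fc EE
  rw [exp_pi, exp_neg_pi, exp_lin, exp_lin]
  have h1 : (1 - c) * -π = - ((1 - c) * π) := by ring
  have h2 : Real.sin ((1 - c) * π) = Real.sin (π * c) := by
    rw [← Real.sin_pi_sub]; ring_nf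
  rw [h1, Real.cos_neg, Real.sin_neg, h2]
  have hI := Complex.I_ne_zero
  field_simp
  push_cast
  ring_nf

lemma Fc_norm_pi (t c x : ℝ) : ‖Fc t c (x + (π : ℝ) * Complex.I)‖ = EE t (1 - c) x := by
  unfold Fc EE
  rw [norm_mul, lin_norm, exp_pi, Complex.norm_exp]
  congr 2; rw [mul_neg, ← Complex.ofReal_mul, ← Complex.ofReal_neg, Complex.ofReal_re]

lemma Fc_norm_neg_pi (t c x : ℝ) : ‖Fc t c (x + (-π : ℝ) * Complex.I)‖ = EE t (1 - c) x := by
  unfold Fc EE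
  rw [norm_mul, lin_norm, exp_neg_pi, Complex.norm_exp]
  congr 2; rw [mul_neg, ← Complex.ofReal_mul, ← Complex.ofReal_neg, Complex.ofReal_re]

lemma HH_base {t c : ℝ} (ht : 0 < t) (hc0 : 0 < c) (hc1 : c ≤ 1) :
    HH (Fc t c) = ((2 * π * (t ^ (c - 1) / Real.Gamma c) : ℝ) : ℂ) := by
  have hvert := fun (v : ℂ) => vert (Fc t c) v (Real.exp t * 1)
    (fun M => ((Fc_diff t c).continuous.comp (by fun_prop)).continuousOn)
    (by
      filter_upwards [eventually_le_atBot 0] with M hM y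
      unfold Fc
      rw [norm_mul]
      gcongr
      · exact expexp_norm' ht hM y
      · exact lin_norm' (by linarith) hM y)
  have hd : DifferentiableOn ℂ (Fc t c) {z | |z.im| ≤ π} := (Fc_diff t c).differentiableOn
  rcases hc1.eq_or_lt with rfl | hc1
  · have hD : DD (Fc t 1) = fun _ => 0 := by
      ext x; rw [DD_Fc]; simp
    rw [contour (Fc t 1) (2 * π * 1) hd (by rw [hD]; simp) (hvert 1 fun y => ?_)]
    · simp [hD]
    · simpa [Fc] using expexp_lim t y
  · have hD : DD (Fc t c) = fun x => ((2 * Real.sin (π * c) * EE t (1 - c) x : ℝ) : ℂ) := by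
      ext x; rw [DD_Fc]
    rw [contour (Fc t c) (2 * π * 0) hd ?_ (hvert 0 fun y => ?_), hD, integral_complex_ofReal,
      integral_const_mul, EE_integral ht (by linarith)]
    · have hs : 0 < Real.sin (π * c) := Real.sin_pos_of_pos_of_lt_pi (by positivity)
        (by nlinarith [Real.pi_pos])
      have hG := Real.Gamma_mul_Gamma_one_sub c
      have hp := Real.Gamma_pos_of_pos hc0
      have ht' : (1 / t) ^ (1 - c) = t ^ (c - 1) := by
        rw [one_div, Real.inv_rpow ht.le, ← Real.rpow_neg ht.le]; ring_nf
      rw [mul_zero, zero_add, ht']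
      norm_cast
      rw [eq_div_iff hs.ne'] at hG
      field_simp
      linear_combination hG
    · rw [hD]
      exact ((EE_integrable ht (by linarith)).const_mul _).ofReal
    · simpa [Fc] using (expexp_lim t y).mul (exp_lim (1 - c) (by linarith) y)

lemma Fc_deriv (t c : ℝ) (z : ℂ) :
    HasDerivAt (Fc t (c + 1)) (t * Fc t c z - c * Fc t (c + 1) z) z := by
  have h1 : HasDerivAt (fun z : ℂ => Complex.exp (t * Complex.exp z))
      (Complex.exp (t * Complex.exp z) * (t * Complex.exp z)) z :=
    ((Complex.hasDerivAt_exp z).const_mul (t:ℂ)).cexp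
  have h2 : HasDerivAt (fun z : ℂ => Complex.exp ((1 - (c + 1) : ℝ) * z))
      (Complex.exp ((1 - (c + 1) : ℝ) * z) * ((1 - (c + 1) : ℝ) * 1)) z :=
    ((hasDerivAt_id z).const_mul _).cexp
  refine (h1.mul h2).congr_deriv ?_
  have h3 : Complex.exp ((1 - c : ℝ) * z) =
      Complex.exp z * Complex.exp ((1 - (c + 1) : ℝ) * z) := by
    rw [← Complex.exp_add]; push_cast; ring_nf
  unfold Fc
  rw [h3]
  push_cast
  ring

lemma DD_Fc_integrable {t : ℝ} (c : ℝ) (ht : 0 < t) :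
    IntegrableOn (DD (Fc t c)) (Set.Ioi 1) := by
  have hD : DD (Fc t c) = fun x => ((2 * Real.sin (π * c) * EE t (1 - c) x : ℝ) : ℂ) := by
    ext x; rw [DD_Fc]
  rw [hD]
  exact Integrable.ofReal ((EE_integrableOn (1 - c) ht).const_mul _)

lemma DD_Fc_tendsto {t : ℝ} (c : ℝ) (ht : 0 < t) :
    Tendsto (DD (Fc t c)) atTop (𝓝 0) := by
  have hD : DD (Fc t c) = fun x => ((2 * Real.sin (π * c) * EE t (1 - c) x : ℝ) : ℂ) := by
    ext x; rw [DD_Fc]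
  rw [hD]
  have := (Complex.continuous_ofReal.tendsto _).comp
    ((EE_tendsto (1 - c) ht).const_mul (2 * Real.sin (π * c)))
  simpa [Function.comp_def] using this

lemma DD_Fc_deriv (t c x : ℝ) :
    HasDerivAt (DD (Fc t (c + 1))) (t * DD (Fc t c) x - c * DD (Fc t (c + 1)) x) x := by
  have h : ∀ a : ℝ, HasDerivAt (fun x : ℝ => Fc t (c + 1) (x + a * Complex.I))
      (t * Fc t c (x + a * Complex.I) - c * Fc t (c + 1) (x + a * Complex.I)) x := by
    intro a
    have h1 : HasDerivAt (fun x : ℝ => (x:ℂ) + a * Complex.I) 1 x :=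
      (Complex.ofRealCLM.hasDerivAt (x := x)).add_const _
    refine (HasDerivAt.comp x (Fc_deriv t c (x + a * Complex.I)) h1).congr_deriv ?_
    rw [mul_one]
  refine (((h π).sub (h (-π))).div_const Complex.I).congr_deriv ?_
  unfold DD
  ring

lemma HH_rec {t : ℝ} (c : ℝ) (ht : 0 < t) :
    t * HH (Fc t c) = c * HH (Fc t (c + 1)) := by
  have h1 := integral_Ioi_of_hasDerivAt_of_tendsto' (a := (1:ℝ)) (fun x _ => DD_Fc_deriv t c x)
    (((DD_Fc_integrable c ht).const_mul _).sub ((DD_Fc_integrable (c + 1) ht).const_mul _))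
    (DD_Fc_tendsto (c + 1) ht)
  rw [integral_sub ((DD_Fc_integrable c ht).const_mul _)
    ((DD_Fc_integrable (c + 1) ht).const_mul _), integral_const_mul, integral_const_mul] at h1
  have hcont : ∀ c : ℝ, Continuous fun y : ℝ => Fc t c ((1:ℝ) + y * Complex.I) := fun c =>
    (Fc_diff t c).continuous.comp (by fun_prop)
  have hder : ∀ y : ℝ, HasDerivAt (fun y : ℝ => Fc t (c + 1) ((1:ℝ) + y * Complex.I) / Complex.I)
      (t * Fc t c ((1:ℝ) + y * Complex.I) - c * Fc t (c + 1) ((1:ℝ) + y * Complex.I)) y := by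
    intro y
    have h1 : HasDerivAt (fun y : ℝ => ((1:ℝ):ℂ) + y * Complex.I) (1 * Complex.I) y :=
      ((Complex.ofRealCLM.hasDerivAt (x := y)).mul_const _).const_add _
    refine ((HasDerivAt.comp y (Fc_deriv t c _) h1).div_const Complex.I).congr_deriv ?_
    have hI := Complex.I_ne_zero
    field_simp
  have h2 := intervalIntegral.integral_eq_sub_of_hasDerivAt (a := -π) (b := π)
    (fun y _ => hder y)
    ((((hcont c).const_mul (t:ℂ)).sub ((hcont (c + 1)).const_mul (c:ℂ))).intervalIntegrable _ _)
  rw [intervalIntegral.integral_sub (((hcont c).const_mul (t:ℂ)).intervalIntegrable _ _)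
    (((hcont (c + 1)).const_mul (c:ℂ)).intervalIntegrable _ _),
    intervalIntegral.integral_const_mul, intervalIntegral.integral_const_mul, ← sub_div] at h2
  have h3 : (Fc t (c + 1) ((1:ℝ) + (π:ℝ) * Complex.I) -
    Fc t (c + 1) ((1:ℝ) + (-π:ℝ) * Complex.I)) / Complex.I = DD (Fc t (c + 1)) (1:ℝ) := rfl
  rw [h3] at h2
  unfold HH
  linear_combination h1 + h2

lemma HH_nat {t : ℝ} (ht : 0 < t) (n : ℕ) : ∀ c : ℝ, 0 < c → c ≤ n + 1 →
    HH (Fc t c) = ((2 * π * (t ^ (c - 1) / Real.Gamma c) : ℝ) : ℂ) := by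
  induction n with
  | zero => intro c h0 h1; exact HH_base ht h0 (by simpa using h1)
  | succ n ih =>
    intro c h0 h1
    rcases le_or_gt c 1 with hc | hc
    · exact HH_base ht h0 hc
    · have hr := HH_rec (c - 1) ht
      have hc' : 0 < c - 1 := by linarith
      rw [ih (c - 1) hc' (by push_cast at h1; linarith), sub_add_cancel] at hr
      have hG := Real.Gamma_add_one hc'.ne'
      rw [sub_add_cancel] at hG
      have hp := Real.Gamma_pos_of_pos hc'
      have ht' : t ^ (c - 1) = t * t ^ (c - 1 - 1) := by
        rw [Real.rpow_sub_one ht.ne' (c - 1)]; field_simp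
      have hne : ((c - 1 : ℝ) : ℂ) ≠ 0 := by exact_mod_cast hc'.ne'
      apply mul_left_cancel₀ hne
      rw [← hr, hG, ht']
      norm_cast
      field_simp

lemma HH_Fc {t c : ℝ} (ht : 0 < t) (hc : 0 < c) :
    HH (Fc t c) = ((2 * π * (t ^ (c - 1) / Real.Gamma c) : ℝ) : ℂ) := by
  obtain ⟨n, hn⟩ := exists_nat_ge c
  exact HH_nat ht n c hc (by linarith)

noncomputable def Kr (t α β s : ℝ) : ℝ := Real.exp (-(s * t)) *
          (s ^ (α - β) * (Real.sin ((β - α) * π) + s ^ α * Real.sin (β * π)) /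
            (π * (s ^ (2 * α) + 2 * s ^ α * Real.cos (α * π) + 1)))

lemma den_ge {u c : ℝ} (hu : 0 ≤ u) (hc : -1 < c) (hc' : c ≤ 1) :
    (1 + c) / 2 * (1 + u) ≤ u ^ 2 + 2 * u * c + 1 := by
  nlinarith [mul_nonneg (sub_nonneg.2 hc') (sq_nonneg (1 - u)),
    mul_nonneg (by linarith : 0 ≤ 1 + c) (mul_nonneg hu (by linarith : 0 ≤ 1 + u))]

lemma cos_gt {α : ℝ} (h0 : 0 < α) (h1 : α < 1) : -1 < Real.cos (α * π) := by
  rw [← Real.cos_pi]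
  have := Real.pi_pos
  exact Real.cos_lt_cos_of_nonneg_of_le_pi (by positivity) le_rfl (by nlinarith)

lemma DD_FF {t α β x : ℝ} (h0 : 0 < α) (h1 : α < 1) :
    DD (FF t α β) x = ((2 * π * (Real.exp x * Kr t α β (Real.exp x)) : ℝ) : ℂ) := by
  have hpi := Real.pi_pos
  have hu := Real.exp_pos (α * x)
  have hden := den_ge hu.le (cos_gt h0 h1) (Real.cos_le_one _)
  have hden' : 0 < Real.exp (α * x) ^ 2 + 2 * Real.exp (α * x) * Real.cos (α * π) + 1 :=
    lt_of_lt_of_le (by have := cos_gt h0 h1; apply mul_pos <;> linarith) hden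
  unfold DD FF Kr
  rw [exp_pi, exp_neg_pi, exp_lin, exp_lin, exp_lin, exp_lin, ← Real.exp_mul, ← Real.exp_mul,
    ← Real.exp_mul]
  have e1 : x * α = α * x := by ring
  have e2 : Real.exp (x * (2 * α)) = Real.exp (α * x) ^ 2 := by
    rw [← Real.exp_nat_mul]; push_cast; ring_nf
  have e3 : Real.exp ((1 + α - β) * x) = Real.exp x * Real.exp (x * (α - β)) := by
    rw [← Real.exp_add]; ring_nf
  have e4 : (1 + α - β) * -π = -((1 + α - β) * π) := by ring
  have e5 : α * -π = -(α * π) := by ring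
  have e6 : Real.sin ((β - α) * π) = Real.sin ((1 + α - β) * π) := by
    rw [← Real.sin_pi_sub]; ring_nf
  have e7 : Real.sin (β * π) = Real.sin ((1 + α - β) * π) * Real.cos (α * π)
      - Real.cos ((1 + α - β) * π) * Real.sin (α * π) := by
    rw [← Real.sin_sub, ← Real.sin_pi_sub]; ring_nf
  have e8 : (t : ℂ) * -(Real.exp x : ℂ) = ((-(Real.exp x * t) : ℝ) : ℂ) := by push_cast; ring
  rw [e1, e2, e3, e4, e5, e6, e7, e8, Real.cos_neg, Real.sin_neg, Real.cos_neg, Real.sin_neg,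
    ← Complex.ofReal_exp]
  have hcs := Real.sin_sq_add_cos_sq (α * π)
  generalize Real.sin ((1 + α - β) * π) = S at *
  generalize Real.cos ((1 + α - β) * π) = C at *
  generalize Real.sin (α * π) = s at *
  generalize Real.cos (α * π) = c at *
  generalize Real.exp (α * x) = u at *
  generalize Real.exp (-(Real.exp x * t)) = A at *
  generalize Real.exp x = B at *
  generalize Real.exp (x * (α - β)) = B' at *
  have hprod : ((u:ℂ) * (c + s * Complex.I) + 1) * ((u:ℂ) * (c + (-s : ℝ) * Complex.I) + 1)
      = ((u ^ 2 + 2 * u * c + 1 : ℝ) : ℂ) := by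
    have hcs' : (s:ℂ) ^ 2 + (c:ℂ) ^ 2 = 1 := by exact_mod_cast hcs
    push_cast
    linear_combination (u:ℂ) ^ 2 * hcs' - (u:ℂ) ^ 2 * s ^ 2 * Complex.I_sq
  have hne : ((u ^ 2 + 2 * u * c + 1 : ℝ) : ℂ) ≠ 0 := by exact_mod_cast hden'.ne'
  have hn1 := left_ne_zero_of_mul (hprod ▸ hne)
  have hn2 := right_ne_zero_of_mul (hprod ▸ hne)
  have hI := Complex.I_ne_zero
  have hpic : (π : ℂ) ≠ 0 := by exact_mod_cast hpi.ne'
  rw [div_sub_div _ _ hn1 hn2, hprod, div_div, div_eq_iff (mul_ne_zero hne hI)]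
  have er : 2 * π * (B * (A * (B' * (S + u * (S * c - C * s)) / (π * (u ^ 2 + 2 * u * c + 1)))))
      * (u ^ 2 + 2 * u * c + 1) = 2 * B * A * B' * (S + u * (S * c - C * s)) := by
    have hd := hden'.ne'
    generalize u ^ 2 + 2 * u * c + 1 = d at hd ⊢
    field_simp
  have er' := congrArg (fun r : ℝ => (r : ℂ)) er
  rw [Complex.ofReal_mul _ (u ^ 2 + 2 * u * c + 1)] at er'
  rw [← mul_assoc (Complex.ofReal _) _ Complex.I, er']
  push_cast
  ring

lemma Kr_cont_meas (t α β : ℝ) : Measurable (Kr t α β) := by unfold Kr; fun_prop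

lemma Kr_bound {t α β x : ℝ} (h0 : 0 < α) (h1 : α < 1) :
    ‖Real.exp x * Kr t α β (Real.exp x)‖ ≤
      1 / (π * ((1 + Real.cos (α * π)) / 2)) * EE t (1 + α - β) x := by
  have hpi := Real.pi_pos
  have hu := Real.exp_pos (α * x)
  have hc := cos_gt h0 h1
  have hden := den_ge hu.le hc (Real.cos_le_one _)
  have hd0 : 0 < (1 + Real.cos (α * π)) / 2 := by linarith
  unfold Kr EE
  rw [← Real.exp_mul, ← Real.exp_mul, ← Real.exp_mul]
  have e1 : x * α = α * x := by ring
  have e2 : Real.exp (x * (2 * α)) = Real.exp (α * x) ^ 2 := by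
    rw [← Real.exp_nat_mul]; push_cast; ring_nf
  have e3 : Real.exp ((1 + α - β) * x) = Real.exp x * Real.exp (x * (α - β)) := by
    rw [← Real.exp_add]; ring_nf
  rw [e1, e2, e3, mul_comm (Real.exp x) t]
  have hs1 := Real.abs_sin_le_one ((β - α) * π)
  have hs2 := Real.abs_sin_le_one (β * π)
  generalize Real.sin ((β - α) * π) = S at *
  generalize Real.sin (β * π) = C at *
  generalize (1 + Real.cos (α * π)) / 2 = δ at *
  generalize Real.exp (α * x) = u at *
  have hden' : 0 < u ^ 2 + 2 * u * Real.cos (α * π) + 1 :=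
    lt_of_lt_of_le (by positivity) hden
  have hq : |S + u * C| / (π * (u ^ 2 + 2 * u * Real.cos (α * π) + 1)) ≤ 1 / (π * δ) := by
    rw [div_le_div_iff₀ (by positivity) (by positivity)]
    have : |S + u * C| ≤ 1 + u := by
      refine (abs_add_le _ _).trans ?_
      rw [abs_mul, abs_of_pos hu]
      nlinarith
    calc |S + u * C| * (π * δ) ≤ (1 + u) * (π * δ) := by gcongr
      _ = π * (δ * (1 + u)) := by ring
      _ ≤ π * (u ^ 2 + 2 * u * Real.cos (α * π) + 1) := by gcongr
      _ = _ := by ring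
  rw [norm_mul, norm_mul, norm_div, norm_mul]
  simp only [Real.norm_eq_abs, Real.abs_exp]
  rw [abs_of_pos (by positivity : 0 < π * (u ^ 2 + 2 * u * Real.cos (α * π) + 1))]
  calc _ = (Real.exp (-(t * Real.exp x)) * (Real.exp x * Real.exp (x * (α - β)))) *
        (|S + u * C| / (π * (u ^ 2 + 2 * u * Real.cos (α * π) + 1))) := by ring
    _ ≤ (Real.exp (-(t * Real.exp x)) * (Real.exp x * Real.exp (x * (α - β)))) *
        (1 / (π * δ)) := by gcongr
    _ = _ := by ring

lemma den_ne {α : ℝ} (h0 : 0 < α) (h1 : α < 1) {z : ℂ} (hz : |z.im| ≤ π) :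
    Complex.exp (α * z) + 1 ≠ 0 := by
  intro h
  have hpi := Real.pi_pos
  have h2 : Complex.exp (α * z) = -1 := by linear_combination h
  obtain ⟨ha, hb⟩ := abs_le.1 hz
  have him : ((α:ℂ) * z).im = α * z.im := by simp
  have h3 := Complex.log_exp (x := α * z) (by rw [him]; nlinarith) (by rw [him]; nlinarith)
  rw [h2, Complex.log_neg_one] at h3
  have h4 := congrArg Complex.im h3
  rw [him] at h4
  simp at h4
  nlinarith

lemma HH_FF {t α β : ℝ} (ht : 0 < t) (h0 : 0 < α) (h1 : α < 1) (hβ : β ≤ 1) :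
    HH (FF t α β) = ((2 * π * ∫ s in Set.Ioi (0:ℝ), Kr t α β s : ℝ) : ℂ) := by
  have hpi := Real.pi_pos
  have hd : DifferentiableOn ℂ (FF t α β) {z | |z.im| ≤ π} := by
    unfold FF
    refine DifferentiableOn.div (by fun_prop) (by fun_prop) fun z hz => den_ne h0 h1 hz
  have hD : DD (FF t α β) = fun x => ((2 * π * (Real.exp x * Kr t α β (Real.exp x)) : ℝ) : ℂ) := by
    ext x; rw [DD_FF h0 h1]
  have hv := vert (FF t α β) 0 (Real.exp t * 1 / (1 / 2))
    (fun M => hd.continuousOn.comp (by fun_prop) (fun y hy => by simpa using abs_le.2 hy)) ?_ ?_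
  · rw [contour (FF t α β) _ hd ?_ hv, hD, integral_complex_ofReal, integral_const_mul, int_exp]
    · simp
    · rw [hD]
      refine Integrable.ofReal (Integrable.const_mul ?_ _)
      refine Integrable.mono' ((EE_integrable (a := 1 + α - β) ht (by linarith)).const_mul _) ?_
        (Eventually.of_forall fun x => Kr_bound h0 h1)
      have := Kr_cont_meas t α β
      exact Measurable.aestronglyMeasurable (by fun_prop)
  · have hsmall : ∀ᶠ M : ℝ in atBot, Real.exp (α * M) < 1 / 2 := by
      have := Real.tendsto_exp_atBot.comp (tendsto_id.const_mul_atBot h0)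
      exact this.eventually_lt_const (by norm_num)
    filter_upwards [eventually_le_atBot 0, hsmall] with M hM hM2 y
    unfold FF
    rw [norm_div, norm_mul]
    have hlow : (1:ℝ) / 2 ≤ ‖Complex.exp (α * (M + y * Complex.I)) + 1‖ := by
      have h5 := norm_sub_le (Complex.exp (α * (M + y * Complex.I)) + 1)
        (Complex.exp (α * (M + y * Complex.I)))
      rw [add_sub_cancel_left, norm_one, lin_norm] at h5
      linarith
    gcongr
    · exact expexp_norm' ht hM y
    · exact lin_norm' (by linarith) hM y
  · intro y
    unfold FF
    have := ((expexp_lim t y).mul (exp_lim (1 + α - β) (by linarith) y)).div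
      ((exp_lim α h0 y).add_const 1) (by simp)
    simp only [mul_zero, zero_div] at this
    exact this

lemma Fc_geom (t α β : ℝ) (k : ℕ) (z : ℂ) :
    (-1) ^ k * Fc t (α * k + β) z = Fc t β z * (-Complex.exp ((-α : ℝ) * z)) ^ k := by
  unfold Fc
  rw [neg_pow (Complex.exp _), ← Complex.exp_nat_mul]
  have : Complex.exp ((1 - (α * k + β) : ℝ) * z) =
      Complex.exp ((1 - β : ℝ) * z) * Complex.exp (k * ((-α : ℝ) * z)) := by
    rw [← Complex.exp_add]; push_cast; ring_nf
  rw [this]; ring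

lemma q_norm {α : ℝ} (h0 : 0 < α) {z : ℂ} (hz : 1 ≤ z.re) :
    ‖-Complex.exp ((-α : ℝ) * z)‖ ≤ Real.exp (-α) := by
  rw [norm_neg, Complex.norm_exp, Complex.re_ofReal_mul]
  gcongr
  nlinarith

lemma Fc_sum (t : ℝ) {α : ℝ} (β : ℝ) (h0 : 0 < α) {z : ℂ} (hz : 1 ≤ z.re) :
    HasSum (fun k : ℕ => (-1) ^ k * Fc t (α * k + β) z) (FF t α β z) := by
  simp only [Fc_geom]
  have hq : ‖-Complex.exp ((-α : ℝ) * z)‖ < 1 :=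
    (q_norm h0 hz).trans_lt (Real.exp_lt_one_iff.2 (by linarith))
  have h := (hasSum_geometric_of_norm_lt_one hq).mul_left (Fc t β z)
  refine (congrArg (HasSum _) ?_).mpr h
  have hne : 1 - -Complex.exp ((-α : ℝ) * z) ≠ 0 := by
    intro h
    rw [← (sub_eq_zero.1 h), norm_one] at hq
    exact lt_irrefl _ hq
  have e1 : Complex.exp (α * z) + 1 =
      Complex.exp (α * z) * (1 - -Complex.exp ((-α : ℝ) * z)) := by
    rw [sub_neg_eq_add, mul_add, ← Complex.exp_add]
    push_cast
    rw [neg_mul, add_neg_cancel, Complex.exp_zero]; ring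
  have e2 : Complex.exp ((1 + α - β : ℝ) * z) =
      Complex.exp (α * z) * Complex.exp ((1 - β : ℝ) * z) := by
    rw [← Complex.exp_add]; push_cast; ring_nf
  unfold FF Fc
  rw [e1, e2]
  have := Complex.exp_ne_zero (α * z)
  field_simp

lemma Fc_bound (t : ℝ) {α : ℝ} (β : ℝ) (h0 : 0 < α) {z : ℂ} (hz : 1 ≤ z.re) (k : ℕ) :
    ‖(-1) ^ k * Fc t (α * k + β) z‖ ≤ Real.exp (-α) ^ k * ‖Fc t β z‖ := by
  rw [Fc_geom, norm_mul, norm_pow, mul_comm]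
  gcongr
  exact q_norm h0 hz

lemma geo_sum {α : ℝ} (h0 : 0 < α) : Summable fun k : ℕ => Real.exp (-α) ^ k :=
  summable_geometric_of_lt_one (Real.exp_pos _).le (Real.exp_lt_one_iff.2 (by linarith))

lemma HH_sum {t α β : ℝ} (ht : 0 < t) (h0 : 0 < α) :
    HasSum (fun k : ℕ => (-1) ^ k * HH (Fc t (α * k + β))) (HH (FF t α β)) := by
  have hg := geo_sum h0
  have hcont : ∀ c : ℝ, Continuous fun y : ℝ => Fc t c ((1:ℝ) + y * Complex.I) := fun c =>
    (Fc_diff t c).continuous.comp (by fun_prop)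
  have hv : HasSum (fun k : ℕ => ∫ y in (-π)..π,
      (-1) ^ k * Fc t (α * k + β) ((1:ℝ) + y * Complex.I))
      (∫ y in (-π)..π, FF t α β ((1:ℝ) + y * Complex.I)) := by
    refine intervalIntegral.hasSum_integral_of_dominated_convergence
      (fun k y => Real.exp (-α) ^ k * ‖Fc t β ((1:ℝ) + y * Complex.I)‖) ?_ ?_ ?_ ?_ ?_
    · intro k
      exact ((hcont _).const_mul _).aestronglyMeasurable
    · exact fun k => Eventually.of_forall fun y _ => Fc_bound t β h0 (by simp) k
    · exact Eventually.of_forall fun y _ => hg.mul_right _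
    · simp only [tsum_mul_right]
      exact ((hcont β).norm.const_mul _).intervalIntegrable _ _
    · exact Eventually.of_forall fun y _ => Fc_sum t β h0 (by simp)
  have hh : HasSum (fun k : ℕ => ∫ x in Set.Ioi (1:ℝ), (-1) ^ k * DD (Fc t (α * k + β)) x)
      (∫ x in Set.Ioi (1:ℝ), DD (FF t α β) x) := by
    refine hasSum_integral_of_dominated_convergence
      (fun k x => Real.exp (-α) ^ k * (2 * EE t (1 - β) x)) ?_ ?_ ?_ ?_ ?_
    · intro k
      exact ((DD_Fc_integrable _ ht).const_mul _).aestronglyMeasurable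
    · intro k
      refine (ae_restrict_iff' measurableSet_Ioi).2 (Eventually.of_forall fun x hx => ?_)
      have hx1 : 1 ≤ x := le_of_lt hx
      have b1 := Fc_bound t β h0 (z := x + (π:ℝ) * Complex.I) (by simpa using hx1) k
      have b2 := Fc_bound t β h0 (z := x + (-π:ℝ) * Complex.I) (by simpa using hx1) k
      rw [Fc_norm_pi] at b1
      rw [Fc_norm_neg_pi] at b2
      unfold DD
      rw [← mul_div_assoc, norm_div, Complex.norm_I, div_one, mul_sub]
      refine (norm_sub_le _ _).trans ?_
      linarith
    · exact Eventually.of_forall fun y => hg.mul_right _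
    · simp only [tsum_mul_right]
      exact ((EE_integrableOn (1 - β) ht).const_mul _).const_mul _
    · refine (ae_restrict_iff' measurableSet_Ioi).2 (Eventually.of_forall fun x hx => ?_)
      have hx1 : 1 ≤ x := le_of_lt hx
      have b1 := Fc_sum t β h0 (z := x + (π:ℝ) * Complex.I) (by simpa using hx1)
      have b2 := Fc_sum t β h0 (z := x + (-π:ℝ) * Complex.I) (by simpa using hx1)
      unfold DD
      have b3 := (b1.sub b2).div_const Complex.I
      simp only [← mul_sub, mul_div_assoc] at b3
      simpa only [mul_div_assoc] using b3
  have := hv.add hh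
  simp only [intervalIntegral.integral_const_mul, integral_const_mul, ← mul_add] at this
  exact this

end MLProof

/-- For `0 < α < 1`, `α ≤ β ≤ 1` and `t > 0`,
`t^{β−1} E_{α,β}(−t^α) = ∫_0^∞ e^{−st} K_{α,β}(s) ds`, where
`K_{α,β}(s) = s^{α−β}[sin((β−α)π) + s^α sin(βπ)] / (π[s^{2α} + 2 s^α cos(απ) + 1])`. -/
theorem mittagLeffler_spectral_representation (α β : ℝ) (hα0 : 0 < α) (hα1 : α < 1)
    (hαβ : α ≤ β) (hβ1 : β ≤ 1) (t : ℝ) (ht : 0 < t) :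
    t ^ (β - 1) * ∑' k : ℕ, (-t ^ α) ^ k / Real.Gamma (α * k + β) =
      ∫ s in Set.Ioi (0 : ℝ),
        Real.exp (-(s * t)) *
          (s ^ (α - β) * (Real.sin ((β - α) * π) + s ^ α * Real.sin (β * π)) /
            (π * (s ^ (2 * α) + 2 * s ^ α * Real.cos (α * π) + 1))) := by
  have h := MLProof.HH_sum (β := β) ht hα0
  rw [MLProof.HH_FF ht hα0 hα1 hβ1] at h
  have hpi := Real.pi_pos
  have e : ∀ k : ℕ, (-1 : ℂ) ^ k * MLProof.HH (MLProof.Fc t (α * k + β)) =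
      ((2 * π * (t ^ (β - 1) * ((-t ^ α) ^ k / Real.Gamma (α * k + β))) : ℝ) : ℂ) := by
    intro k
    have hc : 0 < α * k + β := by
      have : 0 ≤ α * (k : ℝ) := by positivity
      linarith
    rw [MLProof.HH_Fc ht hc]
    have e1 : t ^ (α * k + β - 1) = t ^ (β - 1) * (t ^ α) ^ k := by
      rw [← Real.rpow_natCast, ← Real.rpow_mul ht.le, ← Real.rpow_add ht]; ring_nf
    rw [e1, neg_pow (t ^ α)]
    push_cast
    ring
  simp only [e] at h
  have h2 := (Complex.hasSum_ofReal.1 h).tsum_eq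
  rw [tsum_mul_left, tsum_mul_left] at h2
  exact mul_left_cancel₀ (by positivity) h2
end

section
/- (Bochner–Minlos theorem) Let n ≥ 1 be an integer. There exists a unique probability measure P on the Borel σ-algebra of the weak-* dual S'(ℝⁿ) of the Schwartz space S(ℝⁿ) such that for every φ ∈ S(ℝⁿ), ∫_{S'(ℝⁿ)} e^{i ⟨ω,φ⟩} dP(ω) = e^{−(1/2) ‖φ‖²_{L²(ℝⁿ)}}, where ⟨ω,φ⟩ = ω(φ) is the action of the tempered distribution ω on φ and ‖φ‖²_{L²(ℝⁿ)} = ∫_{ℝⁿ} φ(x)² dx. -/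
open MeasureTheory
set_option linter.style.haveILetI false

namespace BM

abbrev EE (n : ℕ) := EuclideanSpace ℝ (Fin n)
abbrev SS (n : ℕ) := SchwartzMap (EE n) ℝ
abbrev SD (n : ℕ) := WeakDual ℝ (SS n)

lemma finDim_cmm (n l : ℕ) : FiniteDimensional ℝ (EE n [×l]→L[ℝ] ℝ) :=
  FiniteDimensional.of_injective
    (ContinuousMultilinearMap.toMultilinearMapLinear  :
      (EE n [×l]→L[ℝ] ℝ) →ₗ[ℝ] MultilinearMap ℝ (fun _ : Fin l => EE n) ℝ)
    ContinuousMultilinearMap.toMultilinearMap_injective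

lemma secondCountable_cmm (n l : ℕ) : SecondCountableTopology (EE n [×l]→L[ℝ] ℝ) := by
  have := finDim_cmm n l
  have := FiniteDimensional.proper ℝ (EE n [×l]→L[ℝ] ℝ)
  infer_instance

/-- all derivatives, in the compact-open topology -/
noncomputable def derivs (n : ℕ) (φ : SS n) : ∀ l : ℕ, C(EE n, EE n [×l]→L[ℝ] ℝ) := fun l =>
  ⟨fun x => iteratedFDeriv ℝ l φ x, (φ.smooth l).continuous_iteratedFDeriv le_rfl⟩

lemma iter_sub (n l : ℕ) (φ ψ : SS n) (x : EE n) :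
    iteratedFDeriv ℝ l (φ - ψ : SS n) x = iteratedFDeriv ℝ l φ x - iteratedFDeriv ℝ l ψ x := by
  have := iteratedFDeriv_sub_apply (𝕜 := ℝ) (i := l) (x := x) (φ.smooth l).contDiffAt (ψ.smooth l).contDiffAt
  rw [← this]; rfl

lemma approx_on (n N M : ℕ) : ∃ C : Set (SS n), C.Countable ∧
    (∀ c ∈ C, ∀ k ≤ N + 1, ∀ l ≤ N, SchwartzMap.seminorm ℝ k l c ≤ M) ∧
    ∀ φ : SS n, (∀ k ≤ N + 1, ∀ l ≤ N, SchwartzMap.seminorm ℝ k l φ ≤ M) →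
      ∀ R δ : ℝ, 0 < δ → ∃ c ∈ C, ∀ l ≤ N, ∀ x, ‖x‖ ≤ R →
        ‖iteratedFDeriv ℝ l φ x - iteratedFDeriv ℝ l c x‖ < δ := by
  have := fun l => secondCountable_cmm n l
  let A : Set (SS n) := {φ | ∀ k ≤ N + 1, ∀ l ≤ N, SchwartzMap.seminorm ℝ k l φ ≤ M}
  let T : Set (∀ l : ℕ, C(EE n, EE n [×l]→L[ℝ] ℝ)) := derivs n '' A
  obtain ⟨D, hDc, hDd⟩ := TopologicalSpace.exists_countable_dense T
  have hpre : ∀ t : T, ∃ c ∈ A, derivs n c = t := fun t => t.2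
  choose g hgA hg using hpre
  refine ⟨g '' D, hDc.image g, ?_, ?_⟩
  · rintro _ ⟨t, -, rfl⟩; exact hgA t
  · intro φ hφ R δ hδ
    let t0 : T := ⟨derivs n φ, φ, hφ, rfl⟩
    have hcpt : IsCompact (Metric.closedBall (0 : EE n) R) := isCompact_closedBall _ _
    let U : Set T := {t | ∀ l ∈ Finset.range (N + 1), (t.1 l) ∈
      {f : C(EE n, EE n [×l]→L[ℝ] ℝ) | ∀ x ∈ Metric.closedBall (0 : EE n) R, dist (derivs n φ l x) (f x) < δ}}
    have hU : U ∈ nhds t0 := by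
      refine (Filter.eventually_all_finset (Finset.range (N+1))).2 fun l _ => ?_
      have hct : Continuous fun t : T => t.1 l := (continuous_apply l).comp continuous_subtype_val
      refine (hct.tendsto t0).eventually (p := fun f => f ∈ {f : C(EE n, EE n [×l]→L[ℝ] ℝ) | ∀ x ∈ Metric.closedBall (0 : EE n) R, dist (derivs n φ l x) (f x) < δ}) ?_
      have := (ContinuousMap.tendsto_iff_forall_isCompact_tendstoUniformlyOn (F := fun f : C(EE n, EE n [×l]→L[ℝ] ℝ) => f) (f := derivs n φ l) (p := nhds (derivs n φ l))).1 Filter.tendsto_id _ hcpt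
      exact Metric.tendstoUniformlyOn_iff.1 this δ hδ
    obtain ⟨t, htD, htU⟩ := hDd.inter_nhds_nonempty hU
    refine ⟨g t, ⟨t, htD, rfl⟩, fun l hl x hx => ?_⟩
    have := htU l (Finset.mem_range.2 (by omega)) x (by simpa using hx)
    rw [← hg t, dist_eq_norm] at this
    exact this

lemma exists_dense (n : ℕ) : ∃ C : Set (SS n), C.Countable ∧
    ∀ (φ : SS n) (N : ℕ) (ε : ℝ), 0 < ε → ∃ c ∈ C, ∀ k ≤ N, ∀ l ≤ N,
      SchwartzMap.seminorm ℝ k l (φ - c) ≤ ε := by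
  choose C hCc hCA hC using fun p : ℕ × ℕ => approx_on n p.1 p.2
  refine ⟨⋃ p, C p, Set.countable_iUnion hCc, fun φ N ε hε => ?_⟩
  obtain ⟨M, hM⟩ : ∃ M : ℕ, ∀ k ≤ N + 1, ∀ l ≤ N, SchwartzMap.seminorm ℝ k l φ ≤ M := by
    obtain ⟨M, hM⟩ := exists_nat_ge
      (∑ k ∈ Finset.range (N + 2), ∑ l ∈ Finset.range (N + 1), SchwartzMap.seminorm ℝ k l φ)
    refine ⟨M, fun k hk l hl => le_trans ?_ hM⟩
    refine le_trans ?_ (Finset.single_le_sum (f := fun k => ∑ l ∈ Finset.range (N + 1), SchwartzMap.seminorm ℝ k l φ)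
      (fun i _ => Finset.sum_nonneg fun j _ => apply_nonneg _ _)
      (Finset.mem_range.2 (by omega : k < N + 2)))
    exact Finset.single_le_sum (f := fun l => SchwartzMap.seminorm ℝ k l φ)
      (fun j _ => apply_nonneg _ _) (Finset.mem_range.2 (by omega : l < N + 1))
  let R : ℝ := 2 * M / ε + 1
  have hR1 : 1 ≤ R := by
    have : 0 ≤ 2 * (M : ℝ) / ε := by positivity
    simp only [R]; linarith
  have hR : 2 * M / R ≤ ε := by
    rw [div_le_iff₀ (by linarith)]
    simp only [R]; field_simp; linarith
  obtain ⟨c, hc, hcl⟩ := hC (N, M) φ hM R (ε / R ^ N) (by positivity)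
  refine ⟨c, Set.mem_iUnion.2 ⟨_, hc⟩, fun k hk l hl => ?_⟩
  refine SchwartzMap.seminorm_le_bound ℝ k l _ hε.le fun x => ?_
  rw [iter_sub]
  rcases le_total ‖x‖ R with hx | hx
  · have h1 := hcl l hl x hx
    calc ‖x‖ ^ k * _ ≤ R ^ N * (ε / R ^ N) := by
          refine mul_le_mul ?_ h1.le (norm_nonneg _) (by positivity)
          exact (pow_le_pow_left₀ (norm_nonneg _) hx k).trans (pow_le_pow_right₀ hR1 hk)
      _ = ε := by field_simp
  · have hx0 : 0 < ‖x‖ := by linarith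
    have h1 := SchwartzMap.le_seminorm ℝ (k + 1) l φ x
    have h2 := SchwartzMap.le_seminorm ℝ (k + 1) l c x
    have h3 := hM (k + 1) (by omega) l hl
    have h4 := hCA (N, M) c hc (k + 1) (by simpa using hk) l hl
    have h5 : ‖x‖ * (‖x‖ ^ k * ‖iteratedFDeriv ℝ l φ x - iteratedFDeriv ℝ l c x‖) ≤ 2 * M := by
      calc _ ≤ ‖x‖ ^ (k + 1) * (‖iteratedFDeriv ℝ l φ x‖ + ‖iteratedFDeriv ℝ l c x‖) := by
            rw [← mul_assoc, ← pow_succ']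
            gcongr; exact norm_sub_le _ _
        _ ≤ 2 * M := by
            rw [mul_add]; dsimp only at h4; linarith
    calc _ ≤ 2 * M / ‖x‖ := by rw [le_div_iff₀ hx0]; linarith
      _ ≤ 2 * M / R := by gcongr
      _ ≤ ε := hR

/-- equicontinuous sets exhausting the dual -/
def KK (n N : ℕ) : Set (SD n) := {ω | ∀ φ : SS n, ∀ ε : ℝ, 
  (∀ k ≤ N, ∀ l ≤ N, SchwartzMap.seminorm ℝ k l φ ≤ ε) → |ω φ| ≤ N * ε}

lemma exists_KK (n : ℕ) (ω : SD n) : ∃ N, ω ∈ KK n N := by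
  let q : Seminorm ℝ (SS n) := (normSeminorm ℝ ℝ).comp (ContinuousLinearMap.toLinearMap (ω : SS n →L[ℝ] ℝ))
  have hq : Continuous q := continuous_norm.comp (ContinuousLinearMap.continuous (ω : SS n →L[ℝ] ℝ))
  obtain ⟨s, C, -, hC⟩ := Seminorm.bound_of_continuous (schwartz_withSeminorms ℝ (EE n) ℝ) q hq
  obtain ⟨B, hB⟩ := exists_nat_ge (C : ℝ)
  let N := B + s.sup (fun p => p.1 + p.2)
  refine ⟨N, fun φ ε h => ?_⟩
  have hε : 0 ≤ ε := (apply_nonneg _ _).trans (h 0 (by omega) 0 (by omega))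
  have h1 : |ω φ| ≤ C * (s.sup (schwartzSeminormFamily ℝ (EE n) ℝ)) φ := hC φ
  have h2 : (s.sup (schwartzSeminormFamily ℝ (EE n) ℝ)) φ ≤ ε := by
    refine Seminorm.finset_sup_apply_le hε fun p hp => ?_
    have : p.1 + p.2 ≤ s.sup (fun p => p.1 + p.2) := Finset.le_sup (f := fun p : ℕ × ℕ => p.1 + p.2) hp
    exact h p.1 (by omega) p.2 (by omega)
  refine h1.trans ?_
  refine mul_le_mul (hB.trans ?_) h2 (apply_nonneg _ _) (by positivity)
  exact_mod_cast Nat.le_add_right _ _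

lemma continuous_of_KK (n N : ℕ) (C : Set (SS n)) (hC : ∀ (φ : SS n) (N : ℕ) (ε : ℝ), 0 < ε → ∃ c ∈ C, ∀ k ≤ N, ∀ l ≤ N,
      SchwartzMap.seminorm ℝ k l (φ - c) ≤ ε) {X : Type*} [TopologicalSpace X] (f : X → SD n) (hf : ∀ x, f x ∈ KK n N)
    (hc : ∀ c ∈ C, Continuous fun x => f x c) : Continuous f := by
  refine WeakDual.continuous_of_continuous_eval fun φ => ?_
  refine continuous_of_uniform_approx_of_continuous fun u hu => ?_
  obtain ⟨ε, hε, hu⟩ := Metric.mem_uniformity_dist.1 hu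
  obtain ⟨c, hcC, hcc⟩ := hC φ N (ε / (N + 1)) (by positivity)
  refine ⟨_, hc c hcC, fun y => hu ?_⟩
  have := hf y (φ - c) _ hcc
  rw [Real.dist_eq, ← map_sub]
  refine this.trans_lt ?_
  rw [mul_div_assoc', div_lt_iff₀ (by positivity)]
  nlinarith

lemma isLindelof_KK (n N : ℕ) (U : Set (SD n)) : IsLindelof (U ∩ KK n N) := by
  obtain ⟨C, hCc, hC⟩ := exists_dense n
  have : Countable C := hCc
  have hind : Topology.IsInducing (fun (ω : KK n N) (c : C) => (ω : SD n) c.1) := by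
    refine ⟨le_antisymm ?_ ?_⟩
    · refine continuous_iff_le_induced.1 (continuous_pi fun c => ?_)
      exact (WeakDual.eval_continuous c.1).comp continuous_subtype_val
    · refine continuous_iff_le_induced.1 ?_
      refine @continuous_of_KK n N C hC _ (TopologicalSpace.induced _ _) _ (fun x => x.2) fun c hc => ?_
      have h0 : Continuous fun p : C → ℝ => p ⟨c, hc⟩ := continuous_apply _
      letI : TopologicalSpace (KK n N) := TopologicalSpace.induced
        (fun (ω : KK n N) (c : C) => (ω : SD n) c.1) inferInstance
      exact h0.comp (continuous_induced_dom (f := fun (ω : KK n N) (c : C) => (ω : SD n) c.1))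
  have := hind.secondCountableTopology
  have h1 : IsLindelof ((fun ω : KK n N => (ω : SD n)) ⁻¹' U) := HereditarilyLindelofSpace.isLindelof _
  have := h1.image continuous_subtype_val
  rwa [Subtype.image_preimage_coe, Set.inter_comm] at this

/-- The cylinder σ-algebra. -/
@[reducible] noncomputable def cyl (n : ℕ) : MeasurableSpace (SD n) :=
  MeasurableSpace.comap (fun (ω : SD n) (φ : SS n) => ω φ) MeasurableSpace.pi

lemma measurable_eval_cyl (n : ℕ) (φ : SS n) : Measurable[cyl n] (fun ω : SD n => ω φ) :=
  (measurable_pi_apply φ).comp (comap_measurable _)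

lemma borel_le_cyl (n : ℕ) : borel (SD n) ≤ cyl n := by
  refine MeasurableSpace.generateFrom_le fun U (hU : IsOpen U) => ?_
  have key : ∀ ω ∈ U, ∃ V : Set (SD n), IsOpen V ∧ MeasurableSet[cyl n] V ∧ ω ∈ V ∧ V ⊆ U := by
    intro ω hω
    have hind : Topology.IsInducing (fun (ω : SD n) (φ : SS n) => ω φ) := ⟨rfl⟩
    obtain ⟨W, hW, rfl⟩ := hind.isOpen_iff.1 hU
    obtain ⟨I, u, hu, hsub⟩ := isOpen_pi_iff.1 hW _ hω
    refine ⟨⋂ φ ∈ I, (fun ω : SD n => ω φ) ⁻¹' (u φ), ?_, ?_, ?_, ?_⟩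
    · exact isOpen_biInter_finset fun φ hφ => (hu φ hφ).1.preimage (WeakDual.eval_continuous φ)
    · exact Finset.measurableSet_biInter _ fun φ hφ =>
        measurable_eval_cyl n φ (hu φ hφ).1.measurableSet
    · simp only [Set.mem_iInter]; exact fun φ hφ => (hu φ hφ).2
    · intro η hη
      simp only [Set.mem_iInter] at hη
      exact hsub fun φ hφ => hη φ hφ
  choose! V hVo hVm hVω hVU using key
  have : ∀ N, ∃ r : Set U, r.Countable ∧ U ∩ KK n N ⊆ ⋃ i ∈ r, V i.1 := fun N =>
    (isLindelof_KK n N U).elim_countable_subcover (fun ω : U => V ω.1) (fun ω => hVo _ ω.2)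
      fun ω hω => Set.mem_iUnion.2 ⟨⟨ω, hω.1⟩, hVω _ hω.1⟩
  choose r hrc hr using this
  have hUeq : U = ⋃ N, ⋃ i ∈ r N, V i.1 := by
    refine Set.Subset.antisymm (fun ω hω => ?_) ?_
    · obtain ⟨N, hN⟩ := exists_KK n ω
      exact Set.mem_iUnion.2 ⟨N, hr N ⟨hω, hN⟩⟩
    · exact Set.iUnion_subset fun N => Set.iUnion₂_subset fun i _ => hVU _ i.2
  rw [hUeq]
  exact MeasurableSet.iUnion fun N => MeasurableSet.biUnion (hrc N) fun i _ => hVm _ i.2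

lemma uniq (n : ℕ) (P Q : @Measure (SD n) (borel (SD n)))
    (hP : @IsProbabilityMeasure _ (borel (SD n)) P) (hQ : @IsProbabilityMeasure _ (borel (SD n)) Q)
    (h : ∀ φ : SS n, @integral (SD n) ℂ _ _ (borel _) P (fun ω => Complex.exp (Complex.I * (ω φ : ℂ))) =
      @integral (SD n) ℂ _ _ (borel _) Q (fun ω => Complex.exp (Complex.I * (ω φ : ℂ)))) : P = Q := by
  letI : MeasurableSpace (SD n) := borel (SD n)
  have : BorelSpace (SD n) := ⟨rfl⟩
  have hev : ∀ φ : SS n, Measurable (fun ω : SD n => ω φ) := fun φ => (WeakDual.eval_continuous φ).measurable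
  have hm : Measurable (fun (ω : SD n) (φ : SS n) => ω φ) := measurable_pi_iff.2 hev
  have hmapeq : P.map (fun (ω : SD n) (φ : SS n) => ω φ) = Q.map (fun (ω : SD n) (φ : SS n) => ω φ) := by
    refine IsProjectiveLimit.unique (P := fun I => (P.map (fun (ω : SD n) (φ : SS n) => ω φ)).map I.restrict)
      (fun I => rfl) fun I => ?_
    have hres : ∀ I : Finset (SS n), Measurable (fun (ω : SD n) (i : I) => ω i.1) := fun I =>
      measurable_pi_iff.2 fun i => hev i.1
    have hr : Measurable (I.restrict (π := fun _ : SS n => ℝ)) := Finset.measurable_restrict I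
    have e : ∀ R : Measure (SD n), (R.map (fun (ω : SD n) (φ : SS n) => ω φ)).map (I.restrict (π := fun _ : SS n => ℝ)) =
        R.map (fun (ω : SD n) (i : I) => ω i.1) := fun R => Measure.map_map hr hm
    change _ = (P.map (fun (ω : SD n) (φ : SS n) => ω φ)).map (I.restrict (π := fun _ : SS n => ℝ))
    rw [e, e]
    have := Measure.isProbabilityMeasure_map (μ := P) (hres I).aemeasurable
    have := Measure.isProbabilityMeasure_map (μ := Q) (hres I).aemeasurable
    refine Measure.ext_of_charFunDual (funext fun L => ?_)
    rw [charFunDual_apply, charFunDual_apply,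
      integral_map (hres I).aemeasurable (by fun_prop), integral_map (hres I).aemeasurable (by fun_prop)]
    classical
    have hL : ∀ ω : SD n, L (fun i : I => ω i.1) = ω (∑ i : I, L (Pi.single i 1) • i.1) := by
      intro ω
      rw [map_sum]
      conv_lhs => rw [pi_eq_sum_univ' (fun i : I => ω i.1)]
      rw [map_sum]
      refine Finset.sum_congr rfl fun i _ => ?_
      rw [map_smul, map_smul, smul_eq_mul, smul_eq_mul, mul_comm]
    simp_rw [hL, mul_comm _ Complex.I]
    exact (h _).symm
  refine Measure.ext fun A hA => ?_
  obtain ⟨B, hB, rfl⟩ := borel_le_cyl n A hA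
  rw [← Measure.map_apply hm hB, ← Measure.map_apply hm hB, hmapeq]


open scoped FourierTransform RealInnerProductSpace
open Complex (ofRealCLM)

/-- Japanese bracket weight -/
noncomputable def JJ (n : ℕ) (r : ℝ) (x : EE n) : ℝ := (1 + ‖x‖ ^ 2) ^ r

lemma JJ_pos (n : ℕ) (r : ℝ) (x : EE n) : 0 < JJ n r x := by unfold JJ; positivity

lemma JJ_mul (n : ℕ) (r : ℝ) (x : EE n) : JJ n (-r) x * JJ n r x = 1 := by
  unfold JJ; rw [← Real.rpow_add (by positivity)]; simp

lemma JJ_temperate (n : ℕ) (r : ℝ) : (JJ n r).HasTemperateGrowth :=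
  Function.hasTemperateGrowth_one_add_norm_sq_rpow (EE n) r

lemma JJ_cont (n : ℕ) (r : ℝ) : Continuous (JJ n r) := by
  unfold JJ
  exact Continuous.rpow_const (by fun_prop) fun x => Or.inl (by positivity)

lemma JJ_sq_int (n : ℕ) : Integrable (fun x => JJ n (-(n + 1)) x ^ 2) := by
  have h := integrable_rpow_neg_one_add_norm_sq (E := EE n) (μ := volume) (r := 4 * (n + 1 : ℝ))
    (by simp; linarith)
  refine h.congr (Filter.Eventually.of_forall fun x => ?_)
  simp only [JJ]
  rw [← Real.rpow_natCast (_ ^ (-((n : ℝ) + 1))), ← Real.rpow_mul (by positivity)]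
  congr 1; push_cast; ring

lemma JJ_memLp (n : ℕ) : MemLp (JJ n (-(n + 1))) 2 :=
  (memLp_two_iff_integrable_sq (JJ_cont n _).aestronglyMeasurable).2 (JJ_sq_int n)

noncomputable def psi (n : ℕ) : SS n →L[ℝ] SchwartzMap (EE n) ℂ :=
  (SchwartzMap.smulLeftCLM ℂ (JJ n (n + 1))) ∘L (SchwartzMap.postcompCLM ofRealCLM)

lemma psi_apply (n : ℕ) (φ : SS n) (x : EE n) : psi n φ x = ((JJ n (n + 1) x * φ x : ℝ) : ℂ) := by
  simp [psi, SchwartzMap.smulLeftCLM_apply_apply (JJ_temperate n _)]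

noncomputable def DD0 (n : ℕ) : SS n →L[ℝ] SchwartzMap (EE n) ℂ :=
  (SchwartzMap.smulLeftCLM ℂ (JJ n (n + 1))) ∘L (FourierTransform.fourierCLM ℝ (SchwartzMap (EE n) ℂ)) ∘L psi n

lemma DD0_apply (n : ℕ) (φ : SS n) (x : EE n) : DD0 n φ x = (JJ n (n + 1) x : ℂ) * 𝓕 (psi n φ : EE n → ℂ) x := by
  simp [DD0, SchwartzMap.smulLeftCLM_apply_apply (JJ_temperate n _), SchwartzMap.fourier_coe]

noncomputable def DD (n : ℕ) : SS n →L[ℝ] Lp ℂ 2 (volume : Measure (EE n)) :=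
  SchwartzMap.toLpCLM ℝ ℂ 2 volume ∘L DD0 n

lemma DD_coe (n : ℕ) (φ : SS n) :
    DD n φ =ᵐ[volume] fun x => (JJ n (n + 1) x : ℂ) * 𝓕 (psi n φ : EE n → ℂ) x := by
  filter_upwards [(DD0 n φ).coeFn_toLp 2 volume] with x hx
  rw [← DD0_apply, ← hx]; rfl

section
variable {n : ℕ} (f : Lp ℝ 2 (volume : Measure (EE n)))

noncomputable def uu (x : EE n) : ℂ := ((JJ n (-(n + 1)) x * f x : ℝ) : ℂ)

lemma uu_int : Integrable (uu f) :=
  ((JJ_memLp n).integrable_mul (Lp.memLp f)).ofReal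

noncomputable def gg0 (ξ : EE n) : ℂ := (JJ n (-(n + 1)) ξ : ℂ) * 𝓕 (uu f) ξ

lemma four_cont : Continuous (𝓕 (uu f)) :=
  VectorFourier.fourierIntegral_continuous Real.continuous_fourierChar
      (by exact continuous_inner) (uu_int f)

lemma gg0_memLp : MemLp (gg0 f) 2 := by
  have hb : MemLp (𝓕 (uu f)) ⊤ := by
    refine memLp_top_of_bound (four_cont f).aestronglyMeasurable (∫ x, ‖uu f x‖) ?_
    exact Filter.Eventually.of_forall fun ξ => VectorFourier.norm_fourierIntegral_le_integral_norm _ _ _ _ _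
  exact MemLp.mul hb (JJ_memLp n).ofReal

lemma inner_gg (φ : SS n) : ⟪(gg0_memLp f).toLp, DD n φ⟫ = ⟪f, φ.toLp 2⟫ := by
  rw [L2.inner_def, L2.inner_def]
  have h1 : ∫ ξ, ⟪((gg0_memLp f).toLp (gg0 f)) ξ, DD n φ ξ⟫ =
      ∫ ξ, (innerSL ℂ (𝓕 (uu f) ξ) (𝓕 (psi n φ) ξ)).re := by
    refine integral_congr_ae ?_
    filter_upwards [(gg0_memLp f).coeFn_toLp, DD_coe n φ] with ξ h1 h2
    rw [h1, h2, gg0, SchwartzMap.fourier_coe]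
    have h3 := JJ_mul n (n + 1) ξ
    generalize 𝓕 (uu f) ξ = a
    generalize 𝓕 (psi n φ : EE n → ℂ) ξ = b
    simp only [Complex.inner, innerSL_apply_apply, RCLike.inner_apply, map_mul, Complex.conj_ofReal]
    have : (JJ n (n + 1) ξ : ℂ) * b * ((JJ n (-(n + 1)) ξ : ℂ) * (starRingEnd ℂ) a) =
      ((JJ n (-(n + 1)) ξ * JJ n (n + 1) ξ : ℝ) : ℂ) * (b * (starRingEnd ℂ) a) := by
      push_cast; ring
    rw [this, h3]; simp
  have h2 : ∫ ξ, innerSL ℂ (𝓕 (uu f) ξ) (𝓕 (psi n φ) ξ) = ∫ x, innerSL ℂ (uu f x) (psi n φ x) := by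
    have h := VectorFourier.integral_sesq_fourierIntegral_eq_neg_flip (innerSL ℂ (E := ℂ))
      (L := innerₗ (EE n)) Real.continuous_fourierChar continuous_inner (uu_int f) ((𝓕 (psi n φ)).integrable (μ := volume))
    have h' : ∀ x, VectorFourier.fourierIntegral 𝐞 volume (-(innerₗ (EE n)).flip) (𝓕 (psi n φ) : SchwartzMap (EE n) ℂ) x = psi n φ x := by
      intro x
      have : (𝓕⁻ (𝓕 (psi n φ))) x = psi n φ x := by simp
      rw [← this, SchwartzMap.fourierInv_coe, flip_innerₗ]
      rfl
    simp_rw [h'] at h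
    exact h
  have hb : Integrable fun ξ => innerSL ℂ (𝓕 (uu f) ξ) (𝓕 (psi n φ) ξ) := by
    have hc : Continuous fun ξ => (starRingEnd ℂ) (𝓕 (uu f) ξ) := Complex.continuous_conj.comp (four_cont f)
    have h := Integrable.bdd_mul (c := ∫ x, ‖uu f x‖) ((𝓕 (psi n φ)).integrable (μ := volume)) hc.aestronglyMeasurable
      (Filter.Eventually.of_forall fun ξ => by
        rw [RCLike.norm_conj]
        exact VectorFourier.norm_fourierIntegral_le_integral_norm _ _ _ _ _)
    refine h.congr (Filter.Eventually.of_forall fun ξ => ?_)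
    simp only [innerSL_apply_apply, RCLike.inner_apply]
    ring
  have h4 : ∫ ξ, (innerSL ℂ (𝓕 (uu f) ξ) (𝓕 (psi n φ) ξ)).re =
    (∫ ξ, innerSL ℂ (𝓕 (uu f) ξ) (𝓕 (psi n φ) ξ)).re := integral_re hb
  rw [h1, h4, h2]
  have h5 : ∀ᵐ x, innerSL ℂ (uu f x) (psi n φ x) = ((⟪f x, φ.toLp 2 volume x⟫ : ℝ) : ℂ) := by
    filter_upwards [φ.coeFn_toLp 2 volume] with x hx
    rw [hx, psi_apply, uu]
    have h3 := JJ_mul n (n + 1) x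
    simp only [innerSL_apply_apply, RCLike.inner_apply, Complex.conj_ofReal, conj_trivial]
    rw [← Complex.ofReal_mul]
    congr 1
    linear_combination (f x * φ x) * h3
  rw [integral_congr_ae h5, integral_complex_ofReal, Complex.ofReal_re]

lemma sum_four (ξ : EE n) {ι : Type*} (e : ι → Lp ℝ 2 (volume : Measure (EE n))) (he : Orthonormal ℝ e)
    (s : Finset ι) : ∑ i ∈ s, ‖𝓕 (uu (e i)) ξ‖ ^ 2 ≤ 2 * ∫ x, JJ n (-(n + 1)) x ^ 2 := by
  have key : ∀ h : EE n → ℝ, Continuous h → (∀ x, |h x| ≤ 1) →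
      ∑ i ∈ s, (∫ x, (JJ n (-(n + 1)) x * e i x) * h x) ^ 2 ≤ ∫ x, JJ n (-(n + 1)) x ^ 2 := by
    intro h hc hb
    have hm : MemLp (fun x => JJ n (-(n + 1)) x * h x) 2 :=
      (JJ_memLp n).mono ((JJ_cont n _).mul hc).aestronglyMeasurable
        (Filter.Eventually.of_forall fun x => by
          rw [norm_mul]
          exact mul_le_of_le_one_right (norm_nonneg _) (hb x))
    have h1 := Orthonormal.sum_inner_products_le (s := s) hm.toLp he
    have h2 : ‖hm.toLp‖ ^ 2 ≤ ∫ x, JJ n (-(n + 1)) x ^ 2 := by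
      rw [← real_inner_self_eq_norm_sq, L2.inner_def]
      refine integral_mono_ae (L2.integrable_inner _ _) (JJ_sq_int n) ?_
      filter_upwards [hm.coeFn_toLp] with x hx
      rw [hx]
      simp only [real_inner_self_eq_norm_sq, Real.norm_eq_abs, sq_abs]
      rw [mul_pow]
      exact mul_le_of_le_one_right (sq_nonneg _) ((sq_le_one_iff_abs_le_one _).2 (hb x))
    refine le_trans (le_of_eq (Finset.sum_congr rfl fun i _ => ?_)) (h1.trans h2)
    rw [Real.norm_eq_abs, sq_abs, L2.inner_def]
    congr 1
    refine integral_congr_ae ?_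
    filter_upwards [hm.coeFn_toLp] with x hx
    rw [hx]; simp; ring
  have hcc : Continuous fun x : EE n => (((𝐞 (-⟪x, ξ⟫) : Circle) : ℂ)) :=
    continuous_induced_dom.comp (Real.continuous_fourierChar.comp (by fun_prop))
  have k1 := key (fun x => (((𝐞 (-⟪x, ξ⟫) : Circle) : ℂ)).re) (Complex.continuous_re.comp hcc)
    (fun x => (Complex.abs_re_le_norm _).trans (Circle.norm_coe _).le)
  have k2 := key (fun x => (((𝐞 (-⟪x, ξ⟫) : Circle) : ℂ)).im) (Complex.continuous_im.comp hcc)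
    (fun x => (Complex.abs_im_le_norm _).trans (Circle.norm_coe _).le)
  have hF : ∀ i, ‖𝓕 (uu (e i)) ξ‖ ^ 2 = (∫ x, (JJ n (-(n + 1)) x * e i x) * (((𝐞 (-⟪x, ξ⟫) : Circle) : ℂ)).re) ^ 2
      + (∫ x, (JJ n (-(n + 1)) x * e i x) * (((𝐞 (-⟪x, ξ⟫) : Circle) : ℂ)).im) ^ 2 := by
    intro i
    have hi : Integrable (fun x => 𝐞 (-⟪x, ξ⟫) • uu (e i) x) := by
      exact (Real.fourierIntegral_convergent_iff ξ).2 (uu_int (e i))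
    rw [Complex.sq_norm, Complex.normSq_apply, ← sq, ← sq, Real.fourier_eq]
    have hre : (∫ x, 𝐞 (-⟪x, ξ⟫) • uu (e i) x).re = ∫ x, (𝐞 (-⟪x, ξ⟫) • uu (e i) x).re := (integral_re hi).symm
    have him : (∫ x, 𝐞 (-⟪x, ξ⟫) • uu (e i) x).im = ∫ x, (𝐞 (-⟪x, ξ⟫) • uu (e i) x).im := (integral_im hi).symm
    rw [hre, him]
    congr 2
    · refine integral_congr_ae (Filter.Eventually.of_forall fun x => ?_)
      simp only [uu, Circle.smul_def, smul_eq_mul, Complex.re_mul_ofReal]; ring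
    · refine integral_congr_ae (Filter.Eventually.of_forall fun x => ?_)
      simp only [uu, Circle.smul_def, smul_eq_mul, Complex.im_mul_ofReal]; ring
  simp_rw [hF]
  rw [Finset.sum_add_distrib, two_mul]
  exact add_le_add k1 k2

lemma summable_gg {ι : Type*} (e : ι → Lp ℝ 2 (volume : Measure (EE n))) (he : Orthonormal ℝ e) :
    Summable fun i => ‖(gg0_memLp (e i)).toLp‖ ^ 2 := by
  set B := ∫ x, JJ n (-(n + 1)) x ^ 2
  have hn : ∀ i, ‖(gg0_memLp (e i)).toLp‖ ^ 2 = ∫ ξ, JJ n (-(n + 1)) ξ ^ 2 * ‖𝓕 (uu (e i)) ξ‖ ^ 2 := by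
    intro i
    rw [← real_inner_self_eq_norm_sq, L2.inner_def]
    refine integral_congr_ae ?_
    filter_upwards [(gg0_memLp (e i)).coeFn_toLp] with x hx
    rw [hx]
    simp only [real_inner_self_eq_norm_sq, gg0, norm_mul, mul_pow, Complex.norm_real, Real.norm_eq_abs, sq_abs]
  have hgInt : ∀ i, Integrable fun ξ => JJ n (-(n + 1)) ξ ^ 2 * ‖𝓕 (uu (e i)) ξ‖ ^ 2 := by
    intro i
    have := (gg0_memLp (e i)).norm.integrable_sq
    refine this.congr (Filter.Eventually.of_forall fun x => ?_)
    simp only [gg0, norm_mul, mul_pow, Complex.norm_real, Real.norm_eq_abs, sq_abs]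
  refine summable_of_sum_le (c := ∫ ξ : EE n, JJ n (-(n + 1)) ξ ^ 2 * (2 * B)) (fun i => sq_nonneg _) fun s => ?_
  simp_rw [hn]
  rw [← integral_finsetSum _ fun i _ => hgInt i]
  refine integral_mono (integrable_finsetSum _ fun i _ => hgInt i) ((JJ_sq_int n).mul_const _) fun ξ => ?_
  simp only []
  rw [← Finset.mul_sum]
  exact mul_le_mul_of_nonneg_left (sum_four ξ e he s) (sq_nonneg _)

end

section
open scoped RealInnerProductSpace
open ProbabilityTheory

noncomputable def GP (ι : Type) : Measure (ι → ℝ) := Measure.infinitePi (fun _ : ι => gaussianReal 0 1)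

instance (ι : Type) : IsProbabilityMeasure (GP ι) := by unfold GP; infer_instance

lemma GP_map {ι : Type} (i : ι) : (GP ι).map (fun ω => ω i) = gaussianReal 0 1 := by
  have := Measure.infinitePi_map_eval (fun _ : ι => gaussianReal 0 1) i
  exact this

lemma GP_indep (ι : Type) : iIndepFun (fun (i : ι) (ω : ι → ℝ) => ω i) (GP ι) := by
  have := iIndepFun_infinitePi (P := fun _ : ι => gaussianReal 0 1) (X := fun _ x => x)
    (by fun_prop)
  exact this

lemma GP_memLp {ι : Type} (i : ι) : MemLp (fun ω : ι → ℝ => ω i) 2 (GP ι) := by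
  have h : MemLp id 2 ((GP ι).map (fun ω => ω i)) := by
    rw [GP_map]; exact memLp_id_gaussianReal 2
  have hm : AEMeasurable (fun ω : ι → ℝ => ω i) (GP ι) := (measurable_pi_apply i).aemeasurable
  exact (memLp_map_measure_iff (by fun_prop) hm).1 h

lemma GP_mean {ι : Type} (i : ι) : ∫ ω, ω i ∂(GP ι) = 0 := by
  have h : ∫ x, x ∂((GP ι).map (fun ω => ω i)) = 0 := by
    rw [GP_map]; exact integral_id_gaussianReal
  rwa [integral_map (measurable_pi_apply i).aemeasurable (by fun_prop)] at h

lemma GP_sq {ι : Type} (i : ι) : ∫ ω, ω i * ω i ∂(GP ι) = 1 := by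
  have h : variance id ((GP ι).map (fun ω => ω i)) = 1 := by
    rw [GP_map]; simp
  have hm : AEMeasurable (fun ω : ι → ℝ => ω i) (GP ι) := (measurable_pi_apply i).aemeasurable
  rw [variance_map (by fun_prop) hm] at h
  rw [variance_of_integral_eq_zero (measurable_pi_apply i).aemeasurable (by simpa using GP_mean i)] at h
  simpa [sq] using h

lemma GP_cross {ι : Type} {i j : ι} (hij : i ≠ j) : ∫ ω, ω i * ω j ∂(GP ι) = 0 := by
  have h := ((GP_indep ι).indepFun hij).integral_fun_mul_eq_mul_integral
    (measurable_pi_apply i).aestronglyMeasurable (measurable_pi_apply j).aestronglyMeasurable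
  rw [h, GP_mean]; simp

variable {ι : Type} {H : Type} [NormedAddCommGroup H] [InnerProductSpace ℝ H]

lemma TH_memLp (i : ι) (h : H) : MemLp (fun ω : ι → ℝ => ω i • h) 2 (GP ι) := by
  exact (ContinuousLinearMap.toSpanSingleton ℝ h).comp_memLp' (GP_memLp i)

lemma TH_inner (i j : ι) (h k : H) :
    ⟪(TH_memLp i h).toLp, (TH_memLp j k).toLp⟫ = (∫ ω, ω i * ω j ∂(GP ι)) * ⟪h, k⟫ := by
  rw [L2.inner_def, ← integral_mul_const]
  refine integral_congr_ae ?_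
  filter_upwards [(TH_memLp i h).coeFn_toLp, (TH_memLp j k).coeFn_toLp] with ω h1 h2
  rw [h1, h2, real_inner_smul_left, real_inner_smul_right]; ring

noncomputable def TH (i : ι) : H →ₗᵢ[ℝ] Lp H 2 (GP ι) where
  toFun h := (TH_memLp i h).toLp
  map_add' h k := by
    rw [← MemLp.toLp_add]
    congr 1
    ext ω; simp
  map_smul' c h := by
    rw [RingHom.id_apply, ← MemLp.toLp_const_smul]
    congr 1
    ext ω; exact smul_comm _ _ _
  norm_map' h := by
    rw [← sq_eq_sq₀ (norm_nonneg _) (norm_nonneg _), ← real_inner_self_eq_norm_sq, ← real_inner_self_eq_norm_sq]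
    exact (TH_inner i i h h).trans (by rw [GP_sq, one_mul])

lemma TH_orth : OrthogonalFamily ℝ (fun _ : ι => H) (TH (H := H)) := by
  intro i j hij h k
  exact (TH_inner i j h k).trans (by rw [GP_cross hij, zero_mul])

lemma char_lip (h : H) : Continuous fun X : Lp H 2 (GP ι) =>
    ∫ ω, Complex.exp (Complex.I * (⟪X ω, h⟫ : ℝ)) ∂(GP ι) := by
  have hi : ∀ X : Lp H 2 (GP ι), Integrable (fun ω => Complex.exp (Complex.I * (⟪X ω, h⟫ : ℝ))) (GP ι) := by
    intro X
    have hm : AEStronglyMeasurable (fun ω => ⟪X ω, h⟫) (GP ι) :=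
      (Lp.aestronglyMeasurable X).inner aestronglyMeasurable_const
    refine Integrable.of_bound (C := 1) ?_ (Filter.Eventually.of_forall fun ω => ?_)
    · exact (by fun_prop : Continuous fun t : ℝ => Complex.exp (Complex.I * t)).comp_aestronglyMeasurable hm
    · rw [mul_comm, Complex.norm_exp_ofReal_mul_I]
  refine LipschitzWith.continuous (K := ‖h‖₊) (LipschitzWith.of_dist_le_mul fun X Y => ?_)
  rw [dist_eq_norm, dist_eq_norm, ← integral_sub (hi X) (hi Y)]
  have hXY : MemLp (X - Y : Lp H 2 (GP ι)) 2 (GP ι) := Lp.memLp _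
  have hle : ∫ ω, ‖(X - Y : Lp H 2 (GP ι)) ω‖ ∂(GP ι) ≤ ‖X - Y‖ := by
    have h1 := eLpNorm_le_eLpNorm_of_exponent_le (p := 1) (q := 2) (by norm_num) hXY.1
    rw [integral_norm_eq_lintegral_enorm hXY.1, ← eLpNorm_one_eq_lintegral_enorm, Lp.norm_def]
    exact ENNReal.toReal_mono (Lp.eLpNorm_ne_top _) h1
  refine (norm_integral_le_integral_norm _).trans ?_
  rw [coe_nnnorm]
  refine le_trans ?_ (mul_le_mul_of_nonneg_left hle (norm_nonneg h))
  rw [← integral_const_mul]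
  refine integral_mono_ae ((hi X).sub (hi Y)).norm ((hXY.integrable (by norm_num)).norm.const_mul _) ?_
  filter_upwards [Lp.coeFn_sub X Y] with ω hω
  rw [hω, Pi.sub_apply]
  have e1 : Complex.exp (Complex.I * (⟪X ω, h⟫ : ℝ)) - Complex.exp (Complex.I * (⟪Y ω, h⟫ : ℝ)) =
      Complex.exp (Complex.I * (⟪Y ω, h⟫ : ℝ)) * (Complex.exp (Complex.I * (⟪X ω - Y ω, h⟫ : ℝ)) - 1) := by
    rw [mul_sub, mul_one, ← Complex.exp_add, inner_sub_left]
    congr 2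
    push_cast; ring
  rw [e1, norm_mul, mul_comm Complex.I (⟪Y ω, h⟫ : ℂ), Complex.norm_exp_ofReal_mul_I, one_mul]
  refine (Real.norm_exp_I_mul_ofReal_sub_one_le).trans ?_
  rw [mul_comm]
  exact norm_inner_le_norm _ _

lemma char_fin (c : ι → ℝ) (F : Finset ι) :
    ∫ ω, Complex.exp (Complex.I * (∑ i ∈ F, ω i * c i : ℝ)) ∂(GP ι) =
      Complex.exp (-(1 / 2 : ℂ) * ((∑ i ∈ F, c i ^ 2 : ℝ) : ℂ)) := by
  have hind : iIndepFun (fun (i : F) (ω : ι → ℝ) => Complex.exp (Complex.I * (ω i * c i : ℝ))) (GP ι) := by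
    have h1 := (GP_indep ι).precomp (g := fun i : F => (i : ι)) Subtype.val_injective
    exact h1.comp (fun i x => Complex.exp (Complex.I * (x * c i : ℝ))) (fun i => by fun_prop)
  have h2 := hind.integral_fun_prod_eq_prod_integral (fun i => by
    have hm : Measurable fun ω : ι → ℝ => ω i := measurable_pi_apply _
    exact Measurable.aestronglyMeasurable (by fun_prop))
  have h3 : ∀ i : ι, ∫ ω, Complex.exp (Complex.I * (ω i * c i : ℝ)) ∂(GP ι) =
      Complex.exp (-(1 / 2 : ℂ) * ((c i ^ 2 : ℝ) : ℂ)) := by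
    intro i
    have h := charFun_gaussianReal (μ := 0) (v := 1) (c i)
    rw [charFun_apply_real, ← GP_map i, integral_map (measurable_pi_apply i).aemeasurable (by fun_prop)] at h
    convert h using 2
    · ext ω; congr 1; push_cast; ring
    · push_cast; ring
  simp_rw [h3] at h2
  rw [← Complex.exp_sum] at h2
  simp_rw [← Complex.exp_sum, ← Finset.mul_sum] at h2
  simp_rw [← Complex.ofReal_sum] at h2
  rw [Finset.sum_coe_sort F (fun i => c i ^ 2)] at h2
  rw [← h2]
  congr 1; ext ω
  rw [Finset.sum_coe_sort F (fun i => ω i * c i)]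

lemma exists_X [CompleteSpace H] (g : ι → H) (hg : Summable fun i => ‖g i‖ ^ 2) :
    ∃ X : Lp H 2 (GP ι), ∀ (h : H) (s : ℝ), HasSum (fun i => ⟪g i, h⟫ ^ 2) s →
      ∫ ω, Complex.exp (Complex.I * (⟪X ω, h⟫ : ℝ)) ∂(GP ι) = Complex.exp (-(1 / 2 : ℂ) * (s : ℂ)) := by
  obtain ⟨X, hX⟩ := (TH_orth (ι := ι) (H := H)).summable_iff_norm_sq_summable g |>.2 hg
  refine ⟨X, fun h s hs => ?_⟩
  have l1 := ((char_lip h).tendsto X).comp hX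
  have l2 : Filter.Tendsto (fun F : Finset ι => Complex.exp (-(1 / 2 : ℂ) * ((∑ i ∈ F, ⟪g i, h⟫ ^ 2 : ℝ) : ℂ)))
      Filter.atTop (nhds (Complex.exp (-(1 / 2 : ℂ) * (s : ℂ)))) :=
    ((by fun_prop : Continuous fun t : ℝ => Complex.exp (-(1 / 2 : ℂ) * (t : ℂ))).tendsto s).comp hs
  refine tendsto_nhds_unique (l1.congr fun F => ?_) l2
  rw [← char_fin]
  refine integral_congr_ae ?_
  have h1 : ∀ᵐ ω ∂(GP ι), ∀ i ∈ F, TH i (g i) ω = ω i • g i := by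
    rw [Finset.eventually_all]
    intro i _
    exact (TH_memLp i (g i)).coeFn_toLp
  filter_upwards [h1, Lp.coeFn_finsetSum F (fun i => TH i (g i))] with ω h1 h2
  rw [h2, Finset.sum_apply, Finset.sum_congr rfl h1, sum_inner]
  simp_rw [real_inner_smul_left]
end

section
open scoped RealInnerProductSpace

/-- The map sending `h` to the distribution `φ ↦ ⟪h, D φ⟫`. -/
noncomputable def RR (n : ℕ) (h : Lp ℂ 2 (volume : Measure (EE n))) : SD n :=
  StrongDual.toWeakDual ((innerSL ℝ h) ∘L DD n)

lemma RR_apply (n : ℕ) (h : Lp ℂ 2 (volume : Measure (EE n))) (φ : SS n) : RR n h φ = ⟪h, DD n φ⟫ := rfl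

lemma RR_cont (n : ℕ) : Continuous (RR n) := by
  refine WeakDual.continuous_of_continuous_eval fun φ => ?_
  simp_rw [RR_apply]
  fun_prop

lemma existence (n : ℕ) : ∃ P : @Measure (SD n) (borel _), @IsProbabilityMeasure _ (borel _) P ∧
    ∀ φ : SS n, @integral (SD n) ℂ _ _ (borel _) P (fun ω => Complex.exp (Complex.I * (ω φ : ℂ))) =
      Complex.exp (-(1 / 2 : ℂ) * ((∫ x, (φ x) ^ 2 : ℝ) : ℂ)) := by
  letI : MeasurableSpace (SD n) := borel _
  haveI : BorelSpace (SD n) := ⟨rfl⟩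
  letI : MeasurableSpace (Lp ℂ 2 (volume : Measure (EE n))) := borel _
  haveI : BorelSpace (Lp ℂ 2 (volume : Measure (EE n))) := ⟨rfl⟩
  obtain ⟨w, e, -⟩ := exists_hilbertBasis ℝ (Lp ℝ 2 (volume : Measure (EE n)))
  obtain ⟨X, hX⟩ := exists_X (fun i => (gg0_memLp (e i)).toLp) (summable_gg e e.orthonormal)
  have hXm : AEMeasurable (fun ω => RR n (X ω)) (GP w) :=
    (RR_cont n).measurable.comp_aemeasurable (Lp.aestronglyMeasurable X).aemeasurable
  refine ⟨(GP w).map (fun ω => RR n (X ω)), Measure.isProbabilityMeasure_map hXm, fun φ => ?_⟩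
  have hc : Continuous fun ω : SD n => Complex.exp (Complex.I * (ω φ : ℂ)) := by
    have h0 : Continuous fun ω : SD n => ω φ := WeakDual.eval_continuous φ
    exact (by fun_prop : Continuous fun t : ℝ => Complex.exp (Complex.I * (t : ℂ))).comp h0
  rw [integral_map hXm hc.measurable.aestronglyMeasurable]
  refine hX (DD n φ) _ ?_
  simp_rw [inner_gg]
  have h1 := e.hasSum_inner_mul_inner (φ.toLp 2) (φ.toLp 2)
  have h2 : ⟪φ.toLp 2 volume, φ.toLp 2 volume⟫ = ∫ x, (φ x) ^ 2 := by
    rw [L2.inner_def]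
    refine integral_congr_ae ?_
    filter_upwards [φ.coeFn_toLp 2 volume] with x hx
    rw [hx]; simp [sq]
  rw [h2] at h1
  have h3 : (fun i => ⟪φ.toLp 2 volume, e i⟫ * ⟪e i, φ.toLp 2 volume⟫) = fun i => ⟪e i, φ.toLp 2 volume⟫ ^ 2 := by
    ext i
    rw [sq, real_inner_comm (e i)]
  rw [h3] at h1
  exact h1
end

end BM

theorem bochner_minlos (n : ℕ) (hn : 1 ≤ n) :
    letI : MeasurableSpace (WeakDual ℝ (SchwartzMap (EuclideanSpace ℝ (Fin n)) ℝ)) :=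
      borel (WeakDual ℝ (SchwartzMap (EuclideanSpace ℝ (Fin n)) ℝ))
    ∃! P : ProbabilityMeasure (WeakDual ℝ (SchwartzMap (EuclideanSpace ℝ (Fin n)) ℝ)),
      ∀ φ : SchwartzMap (EuclideanSpace ℝ (Fin n)) ℝ,
        ∫ ω : WeakDual ℝ (SchwartzMap (EuclideanSpace ℝ (Fin n)) ℝ),
            Complex.exp (Complex.I * (ω φ : ℂ))
            ∂(P : Measure (WeakDual ℝ (SchwartzMap (EuclideanSpace ℝ (Fin n)) ℝ))) =
          Complex.exp (-(1 / 2 : ℂ) *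
            ((∫ x : EuclideanSpace ℝ (Fin n), (φ x) ^ 2 : ℝ) : ℂ)) := by
  obtain ⟨P, hP, hPc⟩ := BM.existence n
  refine ⟨⟨P, hP⟩, hPc, fun Q hQ => ?_⟩
  refine Subtype.ext ?_
  exact BM.uniq n _ _ Q.2 hP fun φ => (hQ φ).trans (hPc φ).symm
end
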